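/- Fix a similarity class type τ (a multiset of pairs (d_i, λ_i) where d_i is a positive integer and λ_i an integer partition) and nonnegative integers a_{i,j} for 1 ≤ i ≤ r, 1 ≤ j ≤ 2. Then there exists a polynomial P with rational coefficients such that for every prime power q for which there exists a linear operator of similarity class type τ on a finite-dimensional F_q-vector space, and for every such operator T, one has |[(a_{1,1},a_{1,2}),…,(a_{r,1},a_{r,2})]_T| = P(q). -/

import Mathlib

/-- The set `(a,b)_T` of subspaces `W` with `dim W = a` and `dim (W ∩ T⁻¹W) = b`. -/
def pairSet {F V : Type*} [Field F] [AddCommGroup V] [Module F V]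
    (T : V →ₗ[F] V) (a b : ℕ) : Set (Submodule F V) :=
  {W | Module.finrank F W = a ∧ Module.finrank F ↥(W ⊓ W.comap T) = b}

/-- The set `[(a₁,₁,a₁,₂),…,(a_r,₁,a_r,₂)]_T`. -/
def tupleSet {F V : Type*} [Field F] [AddCommGroup V] [Module F V]
    (T : V →ₗ[F] V) (r : ℕ) (a : Fin r → ℕ × ℕ) : Set (Fin r → Submodule F V) :=
  {W | (∀ i, W i ∈ pairSet T (a i).1 (a i).2) ∧
    ∀ (i : Fin r) (h : (i : ℕ) + 1 < r),
      W ⟨(i : ℕ) + 1, h⟩ ⊔ (W ⟨(i : ℕ) + 1, h⟩).map T ≤ W i}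

/-- `T` has similarity class type `τ`, where `τ` is a multiset of pairs
`(dᵢ, λᵢ)` with `dᵢ` the degree of a monic irreducible polynomial and `λᵢ` an
integer partition (a multiset of positive parts).  This holds when there is a
finite set `s` of distinct monic irreducible polynomials and partitions `lam p`
for `p ∈ s` such that `τ` is the multiset of pairs `(deg p, lam p)`, every monic
irreducible polynomial outside `s` acts invertibly on `V` (no primary component),
and for `p ∈ s` the `p`-primary elementary divisors of `T` are given by `lam p`;
the latter is recorded by the (characterizing) kernel dimensions
`dim ker p(T)^j = deg p · Σ_{a ∈ lam p} min a j`. -/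
def HasType {F V : Type*} [Field F] [AddCommGroup V] [Module F V]
    (τ : Multiset (ℕ × Multiset ℕ)) (T : V →ₗ[F] V) : Prop :=
  ∃ (s : Finset (Polynomial F)) (lam : Polynomial F → Multiset ℕ),
    (∀ p ∈ s, p.Monic ∧ Irreducible p) ∧
    (∀ p ∈ s, ∀ a ∈ lam p, 0 < a) ∧
    τ = s.val.map (fun p => (p.natDegree, lam p)) ∧
    (∀ p ∈ s, ∀ j : ℕ,
      Module.finrank F ↥(LinearMap.ker (Polynomial.aeval T (p ^ j))) =
        p.natDegree * ((lam p).map (fun a => min a j)).sum) ∧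
    (∀ p : Polynomial F, p.Monic → Irreducible p → p ∉ s →
      LinearMap.ker (Polynomial.aeval T p) = ⊥)

section part0

open Polynomial

def PC {Ω : Type*} (q : Ω → ℕ) (f : Ω → ℚ) : Prop :=
  ∃ P : ℚ[X], ∀ ω, f ω = P.eval (q ω : ℚ)

namespace PC
variable {Ω : Type*} {q : Ω → ℕ} {f g : Ω → ℚ}

lemma add (hf : PC q f) (hg : PC q g) : PC q (fun ω => f ω + g ω) := by
  obtain ⟨P, hP⟩ := hf; obtain ⟨Q, hQ⟩ := hg
  exact ⟨P + Q, fun ω => by simp [hP, hQ]⟩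

lemma sub (hf : PC q f) (hg : PC q g) : PC q (fun ω => f ω - g ω) := by
  obtain ⟨P, hP⟩ := hf; obtain ⟨Q, hQ⟩ := hg
  exact ⟨P - Q, fun ω => by simp [hP, hQ]⟩

lemma mul (hf : PC q f) (hg : PC q g) : PC q (fun ω => f ω * g ω) := by
  obtain ⟨P, hP⟩ := hf; obtain ⟨Q, hQ⟩ := hg
  exact ⟨P * Q, fun ω => by simp [hP, hQ]⟩

lemma const (c : ℚ) : PC q (fun _ => c) := ⟨C c, fun ω => by simp⟩

lemma qpow (n : ℕ) : PC q (fun ω => (q ω : ℚ) ^ n) := ⟨X ^ n, fun ω => by simp⟩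

lemma sum {ι : Type*} (s : Finset ι) (F : ι → Ω → ℚ) (h : ∀ i ∈ s, PC q (F i)) :
    PC q (fun ω => ∑ i ∈ s, F i ω) := by
  classical
  induction s using Finset.induction_on with
  | empty => simpa using const 0
  | insert a s ha ih =>
    simp only [Finset.sum_insert ha]
    exact (h a (by simp)).add (ih fun i hi => h i (by simp [hi]))

lemma prod {ι : Type*} (s : Finset ι) (F : ι → Ω → ℚ) (h : ∀ i ∈ s, PC q (F i)) :
    PC q (fun ω => ∏ i ∈ s, F i ω) := by
  classical
  induction s using Finset.induction_on with
  | empty => simpa using const 1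
  | insert a s ha ih =>
    simp only [Finset.prod_insert ha]
    exact (h a (by simp)).mul (ih fun i hi => h i (by simp [hi]))

lemma congr (hf : PC q f) (h : ∀ ω, g ω = f ω) : PC q g := by
  have : g = f := funext h
  rwa [this]

lemma comp {Ω' : Type*} {q' : Ω' → ℕ} {g : Ω' → ℚ} (hf : PC q f) (c : Ω' → Ω)
    (hq : ∀ ω, q (c ω) = q' ω) (h : ∀ ω, g ω = f (c ω)) : PC q' g := by
  obtain ⟨P, hP⟩ := hf
  exact ⟨P, fun ω => by rw [h, hP, hq]⟩

lemma exists_clear (S : ℚ[X]) : ∃ N : ℕ, 0 < N ∧ ∀ n : ℕ, ∃ z : ℤ, (N : ℚ) * S.eval (n : ℚ) = z := by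
  induction S using Polynomial.induction_on' with
  | add p r hp hr =>
    obtain ⟨N, hN, h⟩ := hp
    obtain ⟨M, hM, h'⟩ := hr
    refine ⟨N * M, Nat.mul_pos hN hM, fun n => ?_⟩
    obtain ⟨z, hz⟩ := h n
    obtain ⟨w, hw⟩ := h' n
    refine ⟨M * z + N * w, ?_⟩
    push_cast
    rw [← hz, ← hw, eval_add]; ring
  | monomial k a =>
    refine ⟨a.den, a.den_pos, fun n => ⟨a.num * n ^ k, ?_⟩⟩
    have : (a.den : ℚ) * a = a.num := by
      rw [mul_comm]; exact Rat.mul_den_eq_num a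
    rw [eval_monomial, ← mul_assoc, this]; push_cast; ring

lemma div {D : Ω → ℚ} (hD : PC q D) (hN : PC q (fun ω => D ω * f ω))
    (h0 : ∀ ω, D ω ≠ 0) (hz : ∀ ω, ∃ z : ℤ, f ω = z) : PC q f := by
  obtain ⟨d, hd⟩ := hD
  obtain ⟨p, hp⟩ := hN
  have hf : ∀ ω, f ω = p.eval (q ω : ℚ) / d.eval (q ω : ℚ) := fun ω => by
    rw [← hp, ← hd, mul_div_cancel_left₀ _ (h0 ω)]
  by_cases hfin : (Set.range q).Finite
  · classical
    refine ⟨Lagrange.interpolate hfin.toFinset (fun n : ℕ => (n : ℚ))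
      (fun n => p.eval (n : ℚ) / d.eval (n : ℚ)), fun ω => ?_⟩
    have := Lagrange.eval_interpolate_at_node (s := hfin.toFinset) (v := fun n : ℕ => (n : ℚ))
      (i := q ω) (fun n => p.eval (n : ℚ) / d.eval (n : ℚ)) (fun a _ b _ h => by simpa using h)
      (by simp)
    rw [this, hf]
  · have hinf : (Set.range q).Infinite := hfin
    obtain ⟨ω0⟩ : Nonempty Ω := by
      by_contra hne
      rw [not_nonempty_iff] at hne
      exact hfin (by simp [Set.range_eq_empty])
    have hd0 : d ≠ 0 := by
      rintro rfl
      exact h0 ω0 (by rw [hd]; simp)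
    set S := p / d
    set R := p % d
    have hpd : d * S + R = p := EuclideanDomain.div_add_mod p d
    have hdeg : R.degree < d.degree := EuclideanDomain.mod_lt p hd0
    obtain ⟨N, hNpos, hNS⟩ := exists_clear S
    have hlim := Polynomial.div_tendsto_zero_of_degree_lt R d hdeg
    have hlim2 : Filter.Tendsto (fun n : ℕ => R.eval (n : ℚ) / d.eval (n : ℚ)) Filter.atTop
        (nhds 0) := hlim.comp tendsto_natCast_atTop_atTop
    have hev : ∀ᶠ n : ℕ in Filter.atTop, |R.eval (n : ℚ) / d.eval (n : ℚ)| < 1 / N := by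
      have := hlim2.abs
      rw [abs_zero] at this
      exact this.eventually_lt_const (by positivity)
    obtain ⟨n0, hn0⟩ := Filter.eventually_atTop.1 hev
    have hR : R = 0 := by
      apply Polynomial.eq_zero_of_infinite_isRoot
      have hinf2 : ((Set.range q) \ Set.Iio n0).Infinite := hinf.diff (Set.finite_Iio n0)
      refine (hinf2.image (f := fun n : ℕ => (n : ℚ)) (fun a _ b _ h => by simpa using h)).mono ?_
      rintro _ ⟨_, ⟨⟨ω, rfl⟩, hω⟩, rfl⟩
      have hb := hn0 (q ω) (by simpa using hω)
      obtain ⟨z, hz⟩ := hz ω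
      obtain ⟨w, hw⟩ := hNS (q ω)
      have hdne : d.eval (q ω : ℚ) ≠ 0 := by rw [← hd]; exact h0 ω
      have h1 : (N : ℚ) * (R.eval (q ω : ℚ) / d.eval (q ω : ℚ)) = ((N * z - w : ℤ) : ℚ) := by
        push_cast
        rw [← hz, ← hw, hf, ← hpd]
        simp only [eval_add, eval_mul]
        field_simp
        ring
      have hNq : (0 : ℚ) < N := by exact_mod_cast hNpos
      have h2 : |((N * z - w : ℤ) : ℚ)| < 1 := by
        rw [← h1, abs_mul, abs_of_pos hNq]
        rw [lt_div_iff₀ hNq] at hb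
        linarith
      have h3 : (N * z - w : ℤ) = 0 := by
        have : |(N * z - w : ℤ)| < 1 := by exact_mod_cast h2
        exact Int.abs_lt_one_iff.1 this
      rw [h3] at h1
      simp only [Int.cast_zero, mul_eq_zero, div_eq_zero_iff] at h1
      rcases h1 with h | h | h
      · exact absurd h hNq.ne'
      · exact h
      · exact absurd h hdne
    refine ⟨S, fun ω => ?_⟩
    have hdne : d.eval (q ω : ℚ) ≠ 0 := by rw [← hd]; exact h0 ω
    rw [hf, ← hpd, hR]
    simp only [eval_add, eval_mul, eval_zero, add_zero]
    field_simp

lemma div_nat {D : Ω → ℕ} {f : Ω → ℕ} (hD : PC q (fun ω => (D ω : ℚ)))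
    (hN : PC q (fun ω => ((D ω * f ω : ℕ) : ℚ)))
    (h0 : ∀ ω, D ω ≠ 0) : PC q (fun ω => (f ω : ℚ)) :=
  div hD (by simpa using hN) (fun ω => by simpa using h0 ω) (fun ω => ⟨f ω, by simp⟩)

end PC

lemma ncard_fiber {α β : Type*} (A : Set α) (hA : A.Finite) (B : Finset β) (π : α → β)
    (hπ : ∀ x ∈ A, π x ∈ B) : A.ncard = ∑ b ∈ B, {x | x ∈ A ∧ π x = b}.ncard := by
  classical
  have e : A.ncard = hA.toFinset.card := Set.ncard_eq_toFinset_card A hA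
  rw [e, Finset.card_eq_sum_card_fiberwise (t := B) (f := π)
    (fun x hx => hπ x (by simpa using hx))]
  refine Finset.sum_congr rfl fun b _ => ?_
  rw [← Set.ncard_coe_finset]
  congr 1
  ext x; simp

end part0

section part1

open Polynomial

section modcount
variable {R A B C : Type*} [Ring R] [AddCommGroup A] [Module R A] [AddCommGroup B] [Module R B]
  [AddCommGroup C] [Module R C]

def injS (R A B : Type*) [Ring R] [AddCommGroup A] [Module R A] [AddCommGroup B] [Module R B] :
    Set (A →ₗ[R] B) := {f | Function.Injective f}

def surjS (R A B : Type*) [Ring R] [AddCommGroup A] [Module R A] [AddCommGroup B] [Module R B] :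
    Set (A →ₗ[R] B) := {f | Function.Surjective f}

def subS (R A B : Type*) [Ring R] [AddCommGroup A] [Module R A] [AddCommGroup B] [Module R B] :
    Set (Submodule R B) := {W | Nonempty (A ≃ₗ[R] W)}

lemma finite_submodule [Finite B] : Finite (Submodule R B) :=
  Finite.of_injective (fun W : Submodule R B => (W : Set B)) SetLike.coe_injective

lemma finite_hom [Finite A] [Finite B] : Finite (A →ₗ[R] B) :=
  Finite.of_injective (fun f : A →ₗ[R] B => (f : A → B)) DFunLike.coe_injective

lemma card_sub_mul [Finite A] [Finite B] :
    (injS R A A).ncard * (subS R A B).ncard = (injS R A B).ncard := by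
  classical
  haveI := finite_submodule (R := R) (B := B)
  haveI := finite_hom (R := R) (A := A) (B := B)
  haveI := finite_hom (R := R) (A := A) (B := A)
  have hfin : (subS R A B).Finite := Set.toFinite _
  rw [ncard_fiber (injS R A B) (Set.toFinite _) hfin.toFinset (fun f => LinearMap.range f)
    (fun f hf => by
      simp only [Set.Finite.mem_toFinset]
      exact ⟨LinearEquiv.ofInjective f hf⟩)]
  rw [Finset.sum_congr rfl (g := fun _ => (injS R A A).ncard)]
  · rw [Finset.sum_const, Set.ncard_eq_toFinset_card _ hfin, smul_eq_mul, mul_comm]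
  · intro W hW
    obtain ⟨e⟩ : Nonempty (A ≃ₗ[R] W) := (Set.Finite.mem_toFinset hfin).1 hW
    symm
    refine Set.ncard_congr (fun g _ => W.subtype ∘ₗ e.toLinearMap ∘ₗ g) ?_ ?_ ?_
    · intro g hg
      have hs : Function.Surjective g := Finite.surjective_of_injective hg
      refine ⟨?_, ?_⟩
      · exact W.injective_subtype.comp (e.injective.comp hg)
      · rw [LinearMap.range_comp, LinearMap.range_comp, LinearMap.range_eq_top.2 hs]
        simp
    · intro g g' _ _ h
      ext a
      have := LinearMap.congr_fun h a
      simpa using this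
    · rintro f ⟨hf, rfl⟩
      refine ⟨e.symm.toLinearMap ∘ₗ f.rangeRestrict, ?_, ?_⟩
      · refine e.symm.injective.comp ?_
        intro x y hxy
        exact hf (by simpa using congrArg Subtype.val hxy)
      · ext a; simp

lemma card_range_eq [Finite A] [Finite B] (W : Submodule R B) (e : C ≃ₗ[R] W) :
    {f : A →ₗ[R] B | LinearMap.range f = W}.ncard = (surjS R A C).ncard := by
  symm
  refine Set.ncard_congr (fun g _ => W.subtype ∘ₗ e.toLinearMap ∘ₗ g) ?_ ?_ ?_
  · intro g hg
    show LinearMap.range _ = W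
    rw [LinearMap.range_comp, LinearMap.range_comp, LinearMap.range_eq_top.2 hg]
    simp
  · intro g g' _ _ h
    ext a
    have := LinearMap.congr_fun h a
    simpa using this
  · rintro f rfl
    refine ⟨e.symm.toLinearMap ∘ₗ f.rangeRestrict, ?_, ?_⟩
    · exact e.symm.surjective.comp f.surjective_rangeRestrict
    · ext a; simp

lemma injS_ncard_pos [Finite A] : (injS R A A).ncard ≠ 0 := by
  haveI := finite_hom (R := R) (A := A) (B := A)
  exact (Set.ncard_pos (Set.toFinite _)).2 ⟨LinearMap.id, fun _ _ h => h⟩ |>.ne'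

lemma injS_congr_right (e : B ≃ₗ[R] C) : (injS R A B).ncard = (injS R A C).ncard := by
  refine Set.ncard_congr (fun g _ => e.toLinearMap ∘ₗ g) ?_ ?_ ?_
  · intro g hg
    exact e.injective.comp hg
  · intro g g' _ _ h
    ext a
    have := LinearMap.congr_fun h a
    simpa using this
  · intro f hf
    exact ⟨e.symm.toLinearMap ∘ₗ f, e.symm.injective.comp hf, by ext; simp⟩

end modcount

section vs
open Module

/-- number of k-dimensional subspaces of an n-dimensional space. -/
noncomputable def gbn (F : Type*) [Field F] (n k : ℕ) : ℕ :=
  {W : Submodule F (Fin n → F) | finrank F W = k}.ncard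

variable {F V : Type*} [Field F] [Fintype F] [AddCommGroup V] [Module F V] [FiniteDimensional F V]

lemma gbn_eq {n : ℕ} (hn : finrank F V = n) (k : ℕ) :
    {W : Submodule F V | finrank F W = k}.ncard = gbn F n k := by
  have e : V ≃ₗ[F] (Fin n → F) := LinearEquiv.ofFinrankEq _ _ (by simp [hn])
  refine Set.ncard_congr (fun W _ => W.map e.toLinearMap) ?_ ?_ ?_
  · intro W hW
    show finrank F _ = k
    rw [← hW]
    exact LinearEquiv.finrank_map_eq e W
  · intro W W' _ _ h
    exact Submodule.map_injective_of_injective e.injective h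
  · intro W hW
    refine ⟨W.map e.symm.toLinearMap, ?_, ?_⟩
    · show finrank F _ = k
      rw [← hW]
      exact LinearEquiv.finrank_map_eq e.symm W
    · rw [← Submodule.map_comp]; simp

lemma gbn_self (n : ℕ) : gbn F n n = 1 := by
  unfold gbn
  rw [Set.ncard_eq_one]
  refine ⟨⊤, ?_⟩
  ext W
  simp only [Set.mem_ofPred_eq, Set.mem_singleton_iff]
  constructor
  · intro h
    exact Submodule.eq_top_of_finrank_eq (by simp [h])
  · rintro rfl; simp

lemma gbn_lt {n k : ℕ} (h : n < k) : gbn F n k = 0 := by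
  unfold gbn
  convert Set.ncard_empty (Submodule F (Fin n → F))
  ext W
  simp only [Set.mem_ofPred_eq, Set.mem_empty_iff_false, iff_false]
  have := Submodule.finrank_le W
  simp at this
  omega

lemma injS_vs {n k : ℕ} (hk : k ≤ n) :
    (injS F (Fin k → F) (Fin n → F)).ncard = ∏ i : Fin k, (Fintype.card F ^ n - Fintype.card F ^ (i : ℕ)) := by
  have h := card_linearIndependent (K := F) (V := Fin n → F) (k := k) (by simpa using hk)
  rw [Module.finrank_fin_fun] at h
  rw [← h]
  show _ = Nat.card ({s : Fin k → Fin n → F | LinearIndependent F s} : Set _)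
  rw [Nat.card_coe_set_eq]
  refine Set.ncard_congr (fun g _ => fun i => g (Pi.single i 1)) ?_ ?_ ?_
  · intro g hg
    have := (Pi.basisFun F (Fin k)).linearIndependent.map' g (LinearMap.ker_eq_bot.2 hg)
    show LinearIndependent F _
    have e : (fun i => g (Pi.single i 1)) = g ∘ (Pi.basisFun F (Fin k)) := by
      funext i; simp
    rw [e]; exact this
  · intro g g' _ _ h
    refine (Pi.basisFun F (Fin k)).ext fun i => ?_
    simpa using congrFun h i
  · intro s hs
    refine ⟨(Pi.basisFun F (Fin k)).constr F s, ?_, ?_⟩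
    · show Function.Injective _
      rw [← LinearMap.ker_eq_bot, LinearMap.ker_eq_bot']
      intro x hx
      rw [Module.Basis.constr_apply_fintype] at hx
      have := Fintype.linearIndependent_iff.1 hs _ hx
      funext i; simpa using this i
    · funext i
      have := (Pi.basisFun F (Fin k)).constr_basis F s i
      simpa using this

lemma gbn_mul (n k : ℕ) : (injS F (Fin k → F) (Fin k → F)).ncard * gbn F n k =
    (injS F (Fin k → F) (Fin n → F)).ncard := by
  rw [← card_sub_mul (B := Fin n → F)]
  congr 1
  unfold gbn subS
  congr 1
  ext W
  simp only [Set.mem_ofPred_eq]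
  constructor
  · intro h; exact ⟨LinearEquiv.ofFinrankEq _ _ (by simp [h])⟩
  · rintro ⟨e⟩; rw [← e.finrank_eq]; simp

/-- subspaces in an interval -/
lemma card_interval (P Q : Submodule F V) (hPQ : P ≤ Q) (d : ℕ) (hd : finrank F P ≤ d) :
    {D : Submodule F V | P ≤ D ∧ D ≤ Q ∧ finrank F D = d}.ncard =
      gbn F (finrank F Q - finrank F P) (d - finrank F P) := by
  have hfr : ∀ D : Submodule F V, P ≤ D → finrank F (D.map P.mkQ) + finrank F P = finrank F D := by
    intro D hD
    have h1 := LinearMap.finrank_range_add_finrank_ker (P.mkQ.domRestrict D)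
    rw [LinearMap.range_domRestrict, LinearMap.ker_domRestrict, Submodule.ker_mkQ] at h1
    rw [← h1]
    congr 1
    exact (Submodule.comapSubtypeEquivOfLe hD).finrank_eq.symm
  set Q' := Q.map P.mkQ with hQ'
  have hQ'r : finrank F Q' = finrank F Q - finrank F P := by
    have : finrank F Q' + finrank F P = finrank F Q := hfr Q hPQ
    omega
  rw [← gbn_eq hQ'r]
  symm
  refine Set.ncard_congr (fun W _ => (W.map Q'.subtype).comap P.mkQ) ?_ ?_ ?_
  · intro W hW
    have hP : P ≤ (W.map Q'.subtype).comap P.mkQ := by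
      intro x hx
      rw [Submodule.mem_comap]
      have : P.mkQ x = 0 := by simpa using hx
      rw [this]; exact Submodule.zero_mem _
    refine ⟨hP, ?_, ?_⟩
    · have : (W.map Q'.subtype) ≤ Q' := Submodule.map_subtype_le _ _
      refine (Submodule.comap_mono this).trans ?_
      rw [hQ', Submodule.comap_map_mkQ]
      simp [hPQ]
    · have := hfr _ hP
      rw [Submodule.map_comap_eq_of_surjective (Submodule.mkQ_surjective P),
        Submodule.finrank_map_subtype_eq] at this
      have hW' : finrank F W = _ := hW
      omega
  · intro W W' _ _ h
    have h2 := Submodule.comap_injective_of_surjective (Submodule.mkQ_surjective P) h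
    exact Submodule.map_injective_of_injective Q'.injective_subtype h2
  · rintro D ⟨h1, h2, h3⟩
    have h4 : D.map P.mkQ ≤ Q' := Submodule.map_mono h2
    refine ⟨(D.map P.mkQ).comap Q'.subtype, ?_, ?_⟩
    · show finrank F _ = _
      rw [(Submodule.comapSubtypeEquivOfLe h4).finrank_eq]
      have := hfr D h1
      omega
    · rw [Submodule.map_comap_subtype, inf_eq_right.2 h4, Submodule.comap_map_mkQ]
      simp [h1]

end vs

structure FF : Type 1 where
  F : Type
  [fld : Field F]
  [fin : Fintype F]
attribute [instance] FF.fld FF.fin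

def FF.q (f : FF) : ℕ := Fintype.card f.F

lemma PC_injS_vs {Ω : Type*} (o : Ω → FF) (n k : ℕ) (h : k ≤ n) :
    PC (fun ω => (o ω).q) (fun ω => ((injS (o ω).F (Fin k → (o ω).F) (Fin n → (o ω).F)).ncard : ℚ)) := by
  have : PC (fun ω => (o ω).q) (fun ω => ∏ i : Fin k, (((o ω).q : ℚ) ^ n - ((o ω).q : ℚ) ^ (i : ℕ))) :=
    PC.prod _ (fun (i : Fin k) ω => (((o ω).q : ℚ) ^ n - ((o ω).q : ℚ) ^ (i : ℕ)))
      fun i _ => (PC.qpow n).sub (PC.qpow i)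
  refine this.congr fun ω => ?_
  rw [injS_vs h, Nat.cast_prod]
  refine Finset.prod_congr rfl fun i _ => ?_
  rw [Nat.cast_sub]
  · simp [FF.q]
  · exact Nat.pow_le_pow_right Fintype.card_pos (by omega)

lemma PC_gbn {Ω : Type*} (o : Ω → FF) (n k : ℕ) :
    PC (fun ω => (o ω).q) (fun ω => (gbn (o ω).F n k : ℚ)) := by
  by_cases h : k ≤ n
  · refine PC.div_nat (D := fun ω => (injS (o ω).F (Fin k → (o ω).F) (Fin k → (o ω).F)).ncard)
      (PC_injS_vs o k k le_rfl) ?_ (fun ω => injS_ncard_pos)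
    refine (PC_injS_vs o n k h).congr fun ω => ?_
    rw [gbn_mul]
  · refine (PC.const 0).congr fun ω => ?_
    rw [gbn_lt (by omega)]; simp

/-- functions of an integer `φ ≤ s` in the span of the Gaussian binomials. -/
def InSpan {Ω : Type*} (o : Ω → FF) (s : ℕ) (g : ℕ → Ω → ℚ) : Prop :=
  ∃ c : ℕ → Ω → ℚ, (∀ k, PC (fun ω => (o ω).q) (c k)) ∧
    ∀ ω, ∀ φ ≤ s, g φ ω = ∑ k ∈ Finset.range (s + 1), c k ω * gbn (o ω).F φ k

lemma inSpan_ind {Ω : Type*} (o : Ω → FF) (s : ℕ) (t : ℕ) : ∀ e, e + t = s →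
    InSpan o s (fun φ _ => if φ = e then 1 else 0) := by
  classical
  induction t using Nat.strong_induction_on with
  | _ t ih =>
    intro e he
    have : ∀ i : Fin t, InSpan o s (fun φ _ => if φ = e + 1 + i then 1 else 0) := fun i =>
      ih (t - 1 - i) (by omega) _ (by omega)
    choose c hc hc' using this
    refine ⟨fun k ω => (if k = e then 1 else 0) - ∑ i : Fin t, gbn (o ω).F (e + 1 + i) e * c i k ω, ?_, ?_⟩
    · intro k
      exact (PC.const _).sub (PC.sum _ (fun (i : Fin t) ω => (gbn (o ω).F (e + 1 + i) e : ℚ) * c i k ω)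
        fun i _ => (PC_gbn o _ _).mul (hc i k))
    · intro ω φ hφ
      simp only [sub_mul, Finset.sum_sub_distrib, ite_mul, one_mul, zero_mul,
        Finset.sum_ite_eq', Finset.sum_mul]
      rw [if_pos (show e ∈ Finset.range (s+1) from Finset.mem_range.2 (by omega)), Finset.sum_comm]
      simp only [mul_assoc, ← Finset.mul_sum]
      have h2 : ∀ i : Fin t, ∑ k ∈ Finset.range (s + 1), c i k ω * (gbn (o ω).F φ k : ℚ) =
        if φ = e + 1 + i then 1 else 0 := fun i => (hc' i ω φ hφ).symm
      simp only [h2, mul_ite, mul_one, mul_zero]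
      rcases lt_trichotomy φ e with h | h | h
      · rw [if_neg (by omega), gbn_lt h, Finset.sum_eq_zero]
        · simp
        · intro i _; rw [if_neg (by omega)]
      · subst h
        rw [if_pos rfl, gbn_self, Finset.sum_eq_zero]
        · simp
        · intro i _; rw [if_neg (by omega)]
      · rw [if_neg (by omega), Finset.sum_eq_single (⟨φ - (e + 1), by omega⟩ : Fin t)]
        · rw [if_pos (by simp; omega)]
          simp only [show e + 1 + (φ - (e + 1)) = φ by omega, sub_self]
        · intro i _ hi
          rw [if_neg]
          intro h; apply hi; ext; simp; omega
        · simp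

lemma inSpan_all {Ω : Type*} (o : Ω → FF) (s : ℕ) (g : ℕ → Ω → ℚ)
    (hg : ∀ k, PC (fun ω => (o ω).q) (g k)) : InSpan o s g := by
  classical
  have : ∀ e : Fin (s + 1), InSpan o s (fun φ _ => if φ = e then 1 else 0) := fun e =>
    inSpan_ind o s (s - e) e (by omega)
  choose c hc hc' using this
  refine ⟨fun k ω => ∑ e : Fin (s + 1), g e ω * c e k ω, ?_, ?_⟩
  · intro k
    exact PC.sum _ (fun (e : Fin (s+1)) ω => g e ω * c e k ω) fun e _ => (hg e).mul (hc e k)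
  · intro ω φ hφ
    simp only [Finset.sum_mul]
    rw [Finset.sum_comm]
    simp only [mul_assoc, ← Finset.mul_sum]
    have h2 : ∀ e : Fin (s + 1), ∑ k ∈ Finset.range (s + 1), c e k ω * (gbn (o ω).F φ k : ℚ) =
        if φ = e then 1 else 0 := fun e => (hc' e ω φ hφ).symm
    simp only [h2, mul_ite, mul_one, mul_zero]
    rw [Finset.sum_eq_single (⟨φ, by omega⟩ : Fin (s + 1))]
    · simp
    · intro i _ hi
      rw [if_neg]
      intro h; apply hi; ext; simp; omega
    · simp

end part1

section part2

open Polynomial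

section flags
open Module Function
variable {F V : Type*} [Field F] [AddCommGroup V] [Module F V]

def Fl (T : V →ₗ[F] V) (S : Finset ℕ) (h : ℕ → ℕ) : Set (ℕ → Submodule F V) :=
  {X | (∀ s, s ∉ S → X s = ⊥) ∧ (∀ s ∈ S, finrank F (X s) = s) ∧
    (∀ s ∈ S, ∀ t ∈ S, s ≤ t → X s ≤ X t) ∧ ∀ s ∈ S, (X s).map T ≤ X (h s)}

lemma Fl_finite [Finite V] (T : V →ₗ[F] V) (S : Finset ℕ) (h : ℕ → ℕ) : (Fl T S h).Finite := by
  have := finite_submodule (R := F) (B := V)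
  refine Set.Finite.of_finite_image (f := fun X => fun s : S => X s) (Set.toFinite _) ?_
  intro X hX Y hY hXY
  funext s
  by_cases hs : s ∈ S
  · exact congrFun hXY ⟨s, hs⟩
  · rw [hX.1 s hs, hY.1 s hs]

lemma Fl_congr (T : V →ₗ[F] V) (S : Finset ℕ) (h h' : ℕ → ℕ) (hh : ∀ s ∈ S, h s = h' s) :
    Fl T S h = Fl T S h' := by
  unfold Fl
  ext X
  simp only [Set.mem_ofPred_eq]
  refine and_congr_right fun _ => and_congr_right fun _ => and_congr_right fun _ => ?_
  refine forall₂_congr fun s hs => ?_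
  rw [hh s hs]

lemma mem_insert_Fl (T : V →ₗ[F] V) (S : Finset ℕ) (h : ℕ → ℕ) (d u v : ℕ) (hd : d ∉ S)
    (hu : u ∈ S) (hv : v ∈ S) (hud : u < d) (hdv : d < v) (hu' : ∀ s ∈ S, s < d → s ≤ u)
    (hv' : ∀ s ∈ S, d < s → v ≤ s) (X : ℕ → Submodule F V) :
    X ∈ Fl T (insert d S) h ↔ (∀ s, s ∉ insert d S → X s = ⊥) ∧
      (∀ s ∈ S, finrank F (X s) = s) ∧ finrank F (X d) = d ∧
      (∀ s ∈ S, ∀ t ∈ S, s ≤ t → X s ≤ X t) ∧ X u ≤ X d ∧ X d ≤ X v ∧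
      (∀ s ∈ S, (X s).map T ≤ X (h s)) ∧ (X d).map T ≤ X (h d) := by
  constructor
  · rintro ⟨h1, h2, h3, h4⟩
    have m : ∀ s ∈ S, s ∈ insert d S := fun s hs => Finset.mem_insert_of_mem hs
    have md : d ∈ insert d S := Finset.mem_insert_self _ _
    exact ⟨h1, fun s hs => h2 s (m s hs), h2 d md, fun s hs t ht => h3 s (m s hs) t (m t ht),
      h3 u (m u hu) d md hud.le, h3 d md v (m v hv) hdv.le, fun s hs => h4 s (m s hs), h4 d md⟩
  · rintro ⟨h1, h2, h3, h4, h5, h6, h7, h8⟩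
    refine ⟨h1, ?_, ?_, ?_⟩
    · intro s hs
      rcases Finset.mem_insert.1 hs with rfl | hs
      · exact h3
      · exact h2 s hs
    · intro s hs t ht hst
      rcases Finset.mem_insert.1 hs with e | hs1 <;> rcases Finset.mem_insert.1 ht with e' | ht1
      · rw [e, e']
      · subst e
        have : s < t := lt_of_le_of_ne hst (fun e => hd (e ▸ ht1))
        exact h6.trans (h4 v hv t ht1 (hv' t ht1 this))
      · subst e'
        have : s < t := lt_of_le_of_ne hst (fun e => hd (e ▸ hs1))
        exact (h4 s hs1 u hu (hu' s hs1 this)).trans h5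
      · exact h4 s hs1 t ht1 hst
    · intro s hs
      rcases Finset.mem_insert.1 hs with rfl | hs
      · exact h8
      · exact h7 s hs

lemma mem_update_Fl (T : V →ₗ[F] V) (S : Finset ℕ) (h : ℕ → ℕ) (d : ℕ) (hd : d ∉ S)
    (hS : ∀ s ∈ S, h s ∈ S) (X : ℕ → Submodule F V) :
    update X d ⊥ ∈ Fl T S h ↔ (∀ s, s ∉ insert d S → X s = ⊥) ∧
      (∀ s ∈ S, finrank F (X s) = s) ∧
      (∀ s ∈ S, ∀ t ∈ S, s ≤ t → X s ≤ X t) ∧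
      (∀ s ∈ S, (X s).map T ≤ X (h s)) := by
  have e : ∀ s ∈ S, update X d ⊥ s = X s := fun s hs => by
    rw [update_of_ne]; rintro rfl; exact hd hs
  unfold Fl
  simp only [Set.mem_ofPred_eq]
  refine and_congr ?_ (and_congr ?_ (and_congr ?_ ?_))
  · constructor
    · intro h s hs
      have hs' : s ≠ d ∧ s ∉ S := by simpa using hs
      have := h s hs'.2
      rwa [update_of_ne hs'.1] at this
    · intro h s hs
      by_cases hsd : s = d
      · subst hsd; simp
      · rw [update_of_ne hsd]; exact h s (by simp [hsd, hs])
  · exact forall₂_congr fun s hs => by rw [e s hs]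
  · exact forall₂_congr fun s hs => forall₂_congr fun t ht => by rw [e s hs, e t ht]
  · exact forall₂_congr fun s hs => by rw [e s hs, e _ (hS s hs)]

lemma ncard_insert_Fl [Finite V] (T : V →ₗ[F] V) (S : Finset ℕ) (h h0 : ℕ → ℕ) (d : ℕ) (hd : d ∉ S)
    (P Q : (ℕ → Submodule F V) → Submodule F V)
    (H : ∀ X, X ∈ Fl T (insert d S) h ↔ (update X d ⊥ ∈ Fl T S h0 ∧ P (update X d ⊥) ≤ X d ∧
      X d ≤ Q (update X d ⊥) ∧ finrank F (X d) = d)) :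
    (Fl T (insert d S) h).ncard = ∑ Y ∈ (Fl_finite T S h0).toFinset,
      {D : Submodule F V | P Y ≤ D ∧ D ≤ Q Y ∧ finrank F D = d}.ncard := by
  rw [ncard_fiber _ (Fl_finite T _ h) (Fl_finite T S h0).toFinset (fun X => update X d ⊥)
    (fun X hX => by rw [Set.Finite.mem_toFinset]; exact ((H X).1 hX).1)]
  refine Finset.sum_congr rfl fun Y hY => ?_
  rw [Set.Finite.mem_toFinset] at hY
  have hYd : Y d = ⊥ := hY.1 d hd
  have hY' : ∀ D, update (update Y d D) d ⊥ = Y := fun D => by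
    rw [update_idem, ← hYd, update_eq_self]
  symm
  refine Set.ncard_congr (fun D _ => update Y d D) ?_ ?_ ?_
  · rintro D ⟨h1, h2, h3⟩
    refine ⟨(H _).2 ?_, hY' D⟩
    rw [hY', update_self]
    exact ⟨hY, h1, h2, h3⟩
  · intro D D' _ _ h
    simpa using congrFun h d
  · rintro X ⟨hX, rfl⟩
    refine ⟨X d, ((H X).1 hX).2, ?_⟩
    rw [update_idem, update_eq_self]

end flags

structure Op : Type 1 where
  K : FF
  V : Type
  [acg : AddCommGroup V]
  [mod : Module K.F V]
  [fd : FiniteDimensional K.F V]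
  T : V →ₗ[K.F] V
attribute [instance] Op.acg Op.mod Op.fd

instance (o : Op) : Finite o.V := Module.finite_of_finite o.K.F

structure Valid (n : ℕ) (S : Finset ℕ) (h : ℕ → ℕ) : Prop where
  zero : 0 ∈ S
  top : n ∈ S
  le : ∀ s ∈ S, s ≤ n
  h0 : h 0 = 0
  maps : ∀ s ∈ S, h s ∈ S
  ge : ∀ s ∈ S, s ≤ h s
  mono : ∀ s ∈ S, ∀ t ∈ S, s ≤ t → h s ≤ h t

lemma exists_succ {S : Finset ℕ} {c n : ℕ} (hn : n ∈ S) (hc : c < n) :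
    ∃ v ∈ S, c < v ∧ ∀ s ∈ S, c < s → v ≤ s := by
  have hne : (S.filter (c < ·)).Nonempty := ⟨n, by simp [hn, hc]⟩
  refine ⟨(S.filter (c < ·)).min' hne, ?_, ?_, ?_⟩
  · exact (Finset.mem_filter.1 (Finset.min'_mem _ hne)).1
  · exact (Finset.mem_filter.1 (Finset.min'_mem _ hne)).2
  · intro s hs hcs
    exact Finset.min'_le _ _ (by simp [hs, hcs])

lemma exists_pred {S : Finset ℕ} {c n : ℕ} (hn : n ∈ S) (hc : n < c) :
    ∃ v ∈ S, v < c ∧ ∀ s ∈ S, s < c → s ≤ v := by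
  have hne : (S.filter (· < c)).Nonempty := ⟨n, by simp [hn, hc]⟩
  refine ⟨(S.filter (· < c)).max' hne, ?_, ?_, ?_⟩
  · exact (Finset.mem_filter.1 (Finset.max'_mem _ hne)).1
  · exact (Finset.mem_filter.1 (Finset.max'_mem _ hne)).2
  · intro s hs hcs
    exact Finset.le_max' _ _ (by simp [hs, hcs])

lemma gbn_zero {F : Type*} [Field F] [Fintype F] (n : ℕ) : gbn F n 0 = 1 := by
  unfold gbn
  rw [Set.ncard_eq_one]
  refine ⟨⊥, ?_⟩
  ext W
  simp

/-- structure analysis of a valid non-identity h -/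
lemma valid_cases {n : ℕ} {S : Finset ℕ} {h : ℕ → ℕ} (hv : Valid n S h) :
    (∀ s ∈ S, h s = s) ∨
    ∃ c ∈ S, ∃ u ∈ S, ∃ v ∈ S, u < c ∧ c < v ∧ (∀ s ∈ S, s < c → s ≤ u) ∧ (∀ s ∈ S, c < s → v ≤ s) ∧
      h c = h v ∧ ((∀ s ∈ S, h s ≠ c) ∨
        ∃ a ∈ S, 0 < a ∧ a < c ∧ h a = c ∧ ∀ s ∈ S, h s = c → s = a) := by
  classical
  by_cases hex : ∃ c ∈ S, ∃ v ∈ S, c < v ∧ h c = h v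
  · -- the least such c
    have hex' : ∃ c, c ∈ S ∧ ∃ v ∈ S, c < v ∧ h c = h v := hex
    obtain ⟨hcS, w, hwS, hcw, hcw'⟩ := Nat.find_spec hex'
    have hmin := fun m => Nat.find_min hex' (m := m)
    set c := Nat.find hex'
    right
    obtain ⟨v, hvS, hcv, hv'⟩ := exists_succ (c := c) hwS hcw
    have hc0 : 0 < c := by
      by_contra h0
      have h0 : c = 0 := by omega
      rw [h0, hv.h0] at hcw'
      have := hv.ge w hwS
      omega
    obtain ⟨u, huS, huc, hu'⟩ := exists_pred (c := c) hv.zero hc0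
    have hcv' : h c = h v := le_antisymm (hv.mono c hcS v hvS hcv.le)
      (hcw' ▸ hv.mono v hvS w hwS (hv' w hwS hcw))
    refine ⟨c, hcS, u, huS, v, hvS, huc, hcv, hu', hv', hcv', ?_⟩
    by_cases him : ∃ a ∈ S, h a = c
    · right
      obtain ⟨a, haS, hac⟩ := him
      have key : ∀ s ∈ S, h s = c → s < c := by
        intro s hs hsc
        have h1 := hv.ge s hs
        rcases lt_or_eq_of_le (hsc ▸ h1) with h2 | h2
        · exact h2
        · exfalso
          rw [h2] at hsc
          have := hv.ge v hvS
          omega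
      refine ⟨a, haS, ?_, key a haS hac, hac, ?_⟩
      · by_contra h0
        have h0 : a = 0 := by omega
        rw [h0, hv.h0] at hac; omega
      · intro s hs hsc
        by_contra hne
        rcases lt_or_gt_of_ne hne with h1 | h1
        · exact hmin s (key s hs hsc) ⟨hs, a, haS, h1, hsc.trans hac.symm⟩
        · exact hmin a (key a haS hac) ⟨haS, s, hs, h1, hac.trans hsc.symm⟩
    · left
      push Not at him
      exact him
  · left
    push Not at hex
    -- strictly monotone
    have hinj : Set.InjOn h S := by
      intro x hx y hy hxy
      by_contra hne
      rcases lt_or_gt_of_ne hne with h1 | h1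
      · exact hex x hx y hy h1 hxy
      · exact hex y hy x hx h1 hxy.symm
    -- sum argument
    have himg : S.image h = S := by
      refine Finset.eq_of_subset_of_card_le ?_ ?_
      · intro x hx
        obtain ⟨s, hs, rfl⟩ := Finset.mem_image.1 hx
        exact hv.maps s hs
      · rw [Finset.card_image_of_injOn hinj]
    have hsum : ∑ s ∈ S, h s = ∑ s ∈ S, s := by
      conv_rhs => rw [← himg]
      rw [Finset.sum_image hinj]
    intro s hs
    exact ((Finset.sum_eq_sum_iff_of_le hv.ge).1 hsum.symm s hs).symm

end part2

section part3

open Polynomial Module Function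

section steps
variable {F V : Type*} [Field F] [Fintype F] [AddCommGroup V] [Module F V] [FiniteDimensional F V]
  [Finite V]

/-- unconstrained node -/
lemma step_free (T : V →ₗ[F] V) (S : Finset ℕ) (h : ℕ → ℕ) (c u v : ℕ) (hd : c ∉ S)
    (hu : u ∈ S) (hv : v ∈ S) (huc : u < c) (hcv : c < v) (hu' : ∀ s ∈ S, s < c → s ≤ u)
    (hv' : ∀ s ∈ S, c < s → v ≤ s) (hS : ∀ s ∈ S, h s ∈ S) (hc : h c = h v) :
    (Fl T (insert c S) h).ncard = (Fl T S h).ncard * gbn F (v - u) (c - u) := by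
  have ne : ∀ s ∈ S, s ≠ c := fun s hs e => hd (e ▸ hs)
  rw [ncard_insert_Fl T S h h c hd (fun Y => Y u) (fun Y => Y v)]
  · rw [Finset.sum_congr rfl (g := fun _ => gbn F (v - u) (c - u)), Finset.sum_const,
      ← Set.ncard_eq_toFinset_card _ (Fl_finite _ _ _), smul_eq_mul]
    intro Y hY
    rw [Set.Finite.mem_toFinset] at hY
    rw [card_interval _ _ (hY.2.2.1 u hu v hv (by omega)) c (by rw [hY.2.1 u hu]; omega),
      hY.2.1 u hu, hY.2.1 v hv]
  · intro X
    rw [mem_insert_Fl T S h c u v hd hu hv huc hcv hu' hv', mem_update_Fl T S h c hd hS,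
      update_of_ne (ne u hu), update_of_ne (ne v hv)]
    constructor
    · rintro ⟨h1, h2, h3, h4, h5, h6, h7, h8⟩
      exact ⟨⟨h1, h2, h4, h7⟩, h5, h6, h3⟩
    · rintro ⟨⟨h1, h2, h4, h7⟩, h5, h6, h3⟩
      refine ⟨h1, h2, h3, h4, h5, h6, h7, ?_⟩
      rw [hc]
      exact (Submodule.map_mono h6).trans (h7 v hv)

lemma finrank_sup_map (T : V →ₗ[F] V) (A B : Submodule F V) :
    finrank F ↥(B ⊔ A.map T) + finrank F ↥(A ⊓ B.comap T) = finrank F B + finrank F A := by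
  have h1 := LinearMap.finrank_range_add_finrank_ker ((B.mkQ ∘ₗ T).domRestrict A)
  rw [LinearMap.range_domRestrict, LinearMap.ker_domRestrict, LinearMap.ker_comp,
    Submodule.ker_mkQ, Submodule.map_comp] at h1
  have h2 : finrank F ((B.comap T).comap A.subtype) = finrank F ↥(A ⊓ B.comap T) := by
    rw [← Submodule.finrank_map_subtype_eq, Submodule.map_comap_subtype]
  have h3 := LinearMap.finrank_range_add_finrank_ker (B.mkQ.domRestrict (B ⊔ A.map T))
  rw [LinearMap.range_domRestrict, LinearMap.ker_domRestrict, Submodule.ker_mkQ, Submodule.map_sup,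
    (Submodule.comapSubtypeEquivOfLe (le_sup_left : B ≤ B ⊔ A.map T)).finrank_eq] at h3
  have h4 : B.map B.mkQ = ⊥ := by simp
  rw [h4, bot_sup_eq] at h3
  omega

lemma step_C (T : V →ₗ[F] V) (S : Finset ℕ) (h : ℕ → ℕ) (a c u v : ℕ) (hd : c ∉ S)
    (hu : u ∈ S) (hv : v ∈ S) (huc : u < c) (hcv : c < v) (hu' : ∀ s ∈ S, s < c → s ≤ u)
    (hv' : ∀ s ∈ S, c < s → v ≤ s) (hS : ∀ s ∈ S, s ≠ a → h s ∈ S) (hc : h c = h v)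
    (ha : a ∈ S) (hac : h a = c) (hac' : a < c) :
    (Fl T (insert c S) h).ncard = ∑ Y ∈ (Fl_finite T S (update h a v)).toFinset,
      (if u + a ≤ c + finrank F ↥(Y a ⊓ (Y u).comap T) then
      gbn F (v - (u + a - finrank F ↥(Y a ⊓ (Y u).comap T)))
        (c - (u + a - finrank F ↥(Y a ⊓ (Y u).comap T))) else 0) := by
  have ne : ∀ s ∈ S, s ≠ c := fun s hs e => hd (e ▸ hs)
  have hau : a ≤ u := hu' a ha hac'
  have hS' : ∀ s ∈ S, update h a v s ∈ S := by
    intro s hs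
    by_cases hsa : s = a
    · subst hsa; simpa using hv
    · rw [update_of_ne hsa]; exact hS s hs hsa
  rw [ncard_insert_Fl T S h (update h a v) c hd (fun Y => Y u ⊔ (Y a).map T) (fun Y => Y v)]
  · refine Finset.sum_congr rfl fun Y hY => ?_
    rw [Set.Finite.mem_toFinset] at hY
    have hf := finrank_sup_map T (Y a) (Y u)
    rw [hY.2.1 u hu, hY.2.1 a ha] at hf
    have hle : Y u ⊔ (Y a).map T ≤ Y v := by
      refine sup_le (hY.2.2.1 u hu v hv (by omega)) ?_
      have := hY.2.2.2 a ha
      rwa [update_self] at this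
    have hf2 : finrank F ↥(Y u ⊔ (Y a).map T) = u + a - finrank F ↥(Y a ⊓ (Y u).comap T) := by omega
    split_ifs with hif
    · rw [card_interval _ _ hle c (by omega), hf2, hY.2.1 v hv]
    · convert Set.ncard_empty (Submodule F V)
      ext D
      simp only [Set.mem_ofPred_eq, Set.mem_empty_iff_false, iff_false]
      rintro ⟨h1, h2, h3⟩
      have := Submodule.finrank_mono h1
      omega
  · intro X
    rw [mem_insert_Fl T S h c u v hd hu hv huc hcv hu' hv', mem_update_Fl T S _ c hd hS',
      update_of_ne (ne u hu), update_of_ne (ne v hv), update_of_ne (ne a ha)]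
    constructor
    · rintro ⟨h1, h2, h3, h4, h5, h6, h7, h8⟩
      have h9 : (X a).map T ≤ X c := hac ▸ h7 a ha
      refine ⟨⟨h1, h2, h4, ?_⟩, sup_le h5 h9, h6, h3⟩
      intro s hs
      by_cases hsa : s = a
      · subst hsa; rw [update_self]; exact h9.trans h6
      · rw [update_of_ne hsa]; exact h7 s hs
    · rintro ⟨⟨h1, h2, h4, h7⟩, h5, h6, h3⟩
      refine ⟨h1, h2, h3, h4, le_sup_left.trans h5, h6, ?_, ?_⟩
      · intro s hs
        by_cases hsa : s = a
        · subst hsa; rw [hac]; exact le_sup_right.trans h5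
        · have := h7 s hs
          rwa [update_of_ne hsa] at this
      · rw [hc]
        have := h7 v hv
        rw [update_of_ne (by omega)] at this
        exact (Submodule.map_mono h6).trans this

lemma step_D (T : V →ₗ[F] V) (S : Finset ℕ) (h : ℕ → ℕ) (d a b w : ℕ) (hd : d ∉ S)
    (hb : b ∈ S) (ha : a ∈ S) (hw : w ∈ S) (hbd : b < d) (hda : d < a) (hb' : ∀ s ∈ S, s < d → s ≤ b)
    (ha' : ∀ s ∈ S, d < s → a ≤ s) (hS : ∀ s ∈ S, h s ∈ S) (hbw : h b ≤ w) :
    (Fl T (insert d S) (update h d w)).ncard = ∑ Y ∈ (Fl_finite T S h).toFinset,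
      gbn F (finrank F ↥(Y a ⊓ (Y w).comap T) - b) (d - b) := by
  have ne : ∀ s ∈ S, s ≠ d := fun s hs e => hd (e ▸ hs)
  rw [ncard_insert_Fl T S _ h d hd (fun Y => Y b) (fun Y => Y a ⊓ (Y w).comap T)]
  · refine Finset.sum_congr rfl fun Y hY => ?_
    rw [Set.Finite.mem_toFinset] at hY
    rw [card_interval _ _ ?_ d (by rw [hY.2.1 b hb]; omega), hY.2.1 b hb]
    refine le_inf (hY.2.2.1 b hb a ha (by omega)) ?_
    rw [← Submodule.map_le_iff_le_comap]
    exact (hY.2.2.2 b hb).trans (hY.2.2.1 _ (hS b hb) w hw hbw)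
  · intro X
    rw [mem_insert_Fl T S _ d b a hd hb ha hbd hda hb' ha', mem_update_Fl T S _ d hd hS,
      update_of_ne (ne b hb), update_of_ne (ne a ha), update_of_ne (ne w hw), update_self]
    constructor
    · rintro ⟨h1, h2, h3, h4, h5, h6, h7, h8⟩
      refine ⟨⟨h1, h2, h4, ?_⟩, h5, le_inf h6 (Submodule.map_le_iff_le_comap.1 h8), h3⟩
      intro s hs
      have := h7 s hs
      rwa [update_of_ne (ne s hs)] at this
    · rintro ⟨⟨h1, h2, h4, h7⟩, h5, h6, h3⟩
      refine ⟨h1, h2, h3, h4, h5, h6.trans inf_le_left, ?_,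
        Submodule.map_le_iff_le_comap.2 (h6.trans inf_le_right)⟩
      intro s hs
      rw [update_of_ne (ne s hs)]
      exact h7 s hs

lemma step_A (T : V →ₗ[F] V) (S : Finset ℕ) (h : ℕ → ℕ) (a b w : ℕ)
    (hb : b ∈ S) (ha : a ∈ S) (hw : w ∈ S) (hba : b < a) (hS : ∀ s ∈ S, h s ∈ S) (hbw : h b ≤ w)
    (hwa : w ≤ h a) :
    (Fl T S (update h a w)).ncard = ∑ Y ∈ (Fl_finite T S h).toFinset,
      gbn F (finrank F ↥(Y a ⊓ (Y w).comap T) - b) (a - b) := by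
  classical
  have key : ∀ Y ∈ Fl T S h, gbn F (finrank F ↥(Y a ⊓ (Y w).comap T) - b) (a - b) =
      if (Y a).map T ≤ Y w then 1 else 0 := by
    intro Y hY
    have h1 : finrank F ↥(Y a ⊓ (Y w).comap T) ≤ a := by
      have := Submodule.finrank_mono (inf_le_left : Y a ⊓ (Y w).comap T ≤ Y a)
      rwa [hY.2.1 a ha] at this
    split_ifs with hif
    · rw [inf_eq_left.2 (Submodule.map_le_iff_le_comap.1 hif), hY.2.1 a ha, gbn_self]
    · apply gbn_lt
      have : finrank F ↥(Y a ⊓ (Y w).comap T) ≠ a := by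
        intro e
        have := Submodule.eq_of_le_of_finrank_eq (inf_le_left : Y a ⊓ (Y w).comap T ≤ Y a)
          (by rw [e, hY.2.1 a ha])
        exact hif (Submodule.map_le_iff_le_comap.2 (inf_eq_left.1 this))
      omega
  rw [Finset.sum_congr rfl (fun Y hY => key Y ((Set.Finite.mem_toFinset _).1 hY)),
    Finset.sum_boole, ← Set.ncard_coe_finset]
  simp only [Nat.cast_id]
  congr 1
  ext Y
  simp only [Finset.coe_filter, Set.Finite.mem_toFinset, Set.mem_ofPred_eq]
  constructor
  · rintro ⟨h1, h2, h3, h4⟩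
    have h5 : (Y a).map T ≤ Y w := by
      have := h4 a ha
      rwa [update_self] at this
    refine ⟨⟨h1, h2, h3, ?_⟩, h5⟩
    intro s hs
    by_cases hsa : s = a
    · subst hsa; exact h5.trans (h3 w hw _ (hS s hs) hwa)
    · have := h4 s hs
      rwa [update_of_ne hsa] at this
  · rintro ⟨⟨h1, h2, h3, h4⟩, h5⟩
    refine ⟨h1, h2, h3, ?_⟩
    intro s hs
    by_cases hsa : s = a
    · subst hsa; rw [update_self]; exact h5
    · rw [update_of_ne hsa]; exact h4 s hs
end steps

theorem hess {Ω : Type*} (o : Ω → Op) (n : ℕ)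
    (base : ∀ S : Finset ℕ, PC (fun ω => (o ω).K.q) (fun ω => ((Fl (o ω).T S id).ncard : ℚ))) :
    ∀ (N : ℕ) (S : Finset ℕ) (h : ℕ → ℕ), ∑ s ∈ S, s = N → Valid n S h →
      PC (fun ω => (o ω).K.q) (fun ω => ((Fl (o ω).T S h).ncard : ℚ)) := by
  classical
  intro N
  induction N using Nat.strong_induction_on with
  | _ N ih =>
  intro S h hN hv
  rcases valid_cases hv with hid | ⟨c, hc, u, hu, v, hvS, huc, hcv, hu', hv', hcv', hcase⟩
  · refine (base S).congr fun ω => ?_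
    rw [Fl_congr _ S h id hid]
  set S0 := S.erase c with hS0
  have hSS : insert c S0 = S := Finset.insert_erase hc
  have hcS0 : c ∉ S0 := Finset.notMem_erase _ _
  have mem0 : ∀ s, s ∈ S0 ↔ s ≠ c ∧ s ∈ S := fun s => Finset.mem_erase
  have hsum : ∑ s ∈ S0, s + c = N := by rw [← hN]; exact Finset.sum_erase_add _ _ hc
  have hc0 : 0 < c := by omega
  have hn0 : n ∈ S0 := (mem0 n).2 ⟨by have := hv.le v hvS; omega, hv.top⟩
  have h00 : 0 ∈ S0 := (mem0 0).2 ⟨by omega, hv.zero⟩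
  have hu0 : u ∈ S0 := (mem0 u).2 ⟨by omega, hu⟩
  have hv0 : v ∈ S0 := (mem0 v).2 ⟨by omega, hvS⟩
  have hu0' : ∀ s ∈ S0, s < c → s ≤ u := fun s hs => hu' s ((mem0 s).1 hs).2
  have hv0' : ∀ s ∈ S0, c < s → v ≤ s := fun s hs => hv' s ((mem0 s).1 hs).2
  rcases hcase with hno | ⟨a, haS, ha0, hac, hhac, huniq⟩
  · -- free node
    have hmaps : ∀ s ∈ S0, h s ∈ S0 := fun s hs =>
      (mem0 _).2 ⟨hno s ((mem0 s).1 hs).2, hv.maps s ((mem0 s).1 hs).2⟩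
    have hval : Valid n S0 h := ⟨h00, hn0, fun s hs => hv.le s ((mem0 s).1 hs).2, hv.h0, hmaps,
      fun s hs => hv.ge s ((mem0 s).1 hs).2,
      fun s hs t ht => hv.mono s ((mem0 s).1 hs).2 t ((mem0 t).1 ht).2⟩
    have hpc := (ih (∑ s ∈ S0, s) (by omega) S0 h rfl hval).mul
      (PC_gbn (fun ω => (o ω).K) (v - u) (c - u))
    refine hpc.congr fun ω => ?_
    rw [← hSS, step_free (o ω).T S0 h c u v hcS0 hu0 hv0 huc hcv hu0' hv0' hmaps hcv']
    push_cast; rfl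
  · -- constrained node
    have ha : a ∈ S0 := (mem0 a).2 ⟨by omega, haS⟩
    obtain ⟨b, hb, hba, hb'⟩ := exists_pred (c := a) h00 ha0
    have hau : a ≤ u := hu0' a ha hac
    have hbS := ((mem0 b).1 hb).2
    have hmaps : ∀ s ∈ S0, s ≠ a → h s ∈ S0 := fun s hs hsa =>
      (mem0 _).2 ⟨fun e => hsa (huniq s ((mem0 s).1 hs).2 e), hv.maps s ((mem0 s).1 hs).2⟩
    have hlow : ∀ s ∈ S0, s < a → h s ≤ u := by
      intro s hs hsa
      have hs' := ((mem0 s).1 hs).2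
      have h1 : h s ≤ c := hhac ▸ hv.mono s hs' a haS hsa.le
      have h2 : h s ≠ c := fun e => by have := huniq s hs' e; omega
      exact hu' _ (hv.maps s hs') (by omega)
    have hhigh : ∀ s ∈ S0, a < s → v ≤ h s := by
      intro s hs hsa
      have hs' := ((mem0 s).1 hs).2
      have h1 : c ≤ h s := hhac ▸ hv.mono a haS s hs' hsa.le
      have h2 : h s ≠ c := fun e => by have := huniq s hs' e; omega
      exact hv' _ (hv.maps s hs') (by omega)
    set h0 := update h a v with hh0
    have h0a : h0 a = v := update_self _ _ _
    have h0ne : ∀ s, s ≠ a → h0 s = h s := fun s hs => update_of_ne hs _ _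
    have hmaps0 : ∀ s ∈ S0, h0 s ∈ S0 := by
      intro s hs
      by_cases hsa : s = a
      · rw [hsa, h0a]; exact hv0
      · rw [h0ne s hsa]; exact hmaps s hs hsa
    -- general validity of modified functions
    have hvalid : ∀ (S1 : Finset ℕ) (h1 : ℕ → ℕ) (d : ℕ), b < d → d ≤ a → S1 = insert d S0 →
        h1 = update h0 d u → Valid n S1 h1 := by
      intro S1 h1 d hbd hda hS1 hh1
      have h1d : h1 d = u := by rw [hh1, update_self]
      have h1ne : ∀ s, s ≠ d → h1 s = h0 s := fun s hs => by rw [hh1, update_of_ne hs]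
      have lowv : ∀ s ∈ S0, s < d → h1 s = h s ∧ s ≤ b := by
        intro s hs hsd
        exact ⟨by rw [h1ne s (by omega), h0ne s (by omega)], hb' s hs (by omega)⟩
      have highv : ∀ s ∈ S0, d < s → v ≤ h1 s ∧ a ≤ s ∧ h1 s = h0 s := by
        intro s hs hsd
        have has : a ≤ s := by
          by_contra hlt
          have := hb' s hs (by omega); omega
        refine ⟨?_, has, h1ne s (by omega)⟩
        rw [h1ne s (by omega)]
        by_cases hsa : s = a
        · rw [hsa, h0a]
        · rw [h0ne s hsa]; exact hhigh s hs (by omega)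
      refine ⟨?_, ?_, ?_, ?_, ?_, ?_, ?_⟩
      · rw [hS1]; exact Finset.mem_insert_of_mem h00
      · rw [hS1]; exact Finset.mem_insert_of_mem hn0
      · intro s hs
        rw [hS1] at hs
        rcases Finset.mem_insert.1 hs with e | hs
        · have := hv.le a haS; omega
        · exact hv.le s ((mem0 s).1 hs).2
      · rw [(lowv 0 h00 (by omega)).1, hv.h0]
      · intro s hs
        rw [hS1] at hs ⊢
        by_cases hsd : s = d
        · rw [hsd, h1d]; exact Finset.mem_insert_of_mem hu0
        · rw [h1ne s hsd]
          exact Finset.mem_insert_of_mem (hmaps0 s (Finset.mem_of_mem_insert_of_ne hs hsd))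
      · intro s hs
        rw [hS1] at hs
        by_cases hsd : s = d
        · rw [hsd, h1d]; omega
        · have hs0 := Finset.mem_of_mem_insert_of_ne hs hsd
          rw [h1ne s hsd]
          by_cases hsa : s = a
          · rw [hsa, h0a]; omega
          · rw [h0ne s hsa]; exact hv.ge s ((mem0 s).1 hs0).2
      · intro s hs t ht hst
        rw [hS1] at hs ht
        by_cases hsd : s = d
        · by_cases htd : t = d
          · rw [hsd, htd]
          · have ht0 := Finset.mem_of_mem_insert_of_ne ht htd
            have := highv t ht0 (by omega)
            rw [hsd, h1d]; omega
        · have hs0 := Finset.mem_of_mem_insert_of_ne hs hsd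
          by_cases htd : t = d
          · have h2 := lowv s hs0 (by omega)
            have h3 := hlow s hs0 (by omega)
            rw [htd, h1d, h2.1]; exact h3
          · have ht0 := Finset.mem_of_mem_insert_of_ne ht htd
            rw [h1ne s hsd, h1ne t htd]
            by_cases hsa : s = a
            · by_cases hta : t = a
              · rw [hsa, hta]
              · rw [hsa, h0a, h0ne t hta]; exact hhigh t ht0 (by omega)
            · by_cases hta : t = a
              · rw [h0ne s hsa, hta, h0a]
                have := hlow s hs0 (by omega); omega
              · rw [h0ne s hsa, h0ne t hta]
                exact hv.mono s ((mem0 s).1 hs0).2 t ((mem0 t).1 ht0).2 hst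
    have hval0 : Valid n S0 h0 := by
      refine ⟨h00, hn0, fun s hs => hv.le s ((mem0 s).1 hs).2, ?_, hmaps0, ?_, ?_⟩
      · rw [h0ne 0 (by omega), hv.h0]
      · intro s hs
        by_cases hsa : s = a
        · rw [hsa, h0a]; omega
        · rw [h0ne s hsa]; exact hv.ge s ((mem0 s).1 hs).2
      · intro s hs t ht hst
        by_cases hsa : s = a
        · by_cases hta : t = a
          · rw [hsa, hta]
          · rw [hsa, h0a, h0ne t hta]; exact hhigh t ht (by omega)
        · by_cases hta : t = a
          · rw [h0ne s hsa, hta, h0a]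
            have := hlow s hs (by omega); omega
          · rw [h0ne s hsa, h0ne t hta]
            exact hv.mono s ((mem0 s).1 hs).2 t ((mem0 t).1 ht).2 hst
    have hbu : h0 b ≤ u := by rw [h0ne b (by omega)]; exact hlow b hb hba
    -- the sums
    have hk : ∀ k, k ≤ a - b → PC (fun ω => (o ω).K.q) (fun ω =>
        ((∑ Y ∈ (Fl_finite (o ω).T S0 h0).toFinset,
          gbn (o ω).K.F (finrank (o ω).K.F ↥(Y a ⊓ (Y u).comap (o ω).T) - b) k : ℕ) : ℚ)) := by
      intro k hk
      rcases Nat.eq_zero_or_pos k with hk0 | hk0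
      · refine (ih (∑ s ∈ S0, s) (by omega) S0 h0 rfl hval0).congr fun ω => ?_
        rw [hk0]
        simp only [gbn_zero, Finset.sum_const, smul_eq_mul, mul_one]
        rw [← Set.ncard_eq_toFinset_card _ (Fl_finite _ _ _)]
      · rcases Nat.lt_or_ge k (a - b) with hlt | hge
        · set d := b + k with hdd
          have hd : d ∉ S0 := fun hd => by
            have := hb' d hd (by omega); omega
          have hs : ∑ s ∈ insert d S0, s < N := by
            rw [Finset.sum_insert hd]; omega
          refine (ih _ hs (insert d S0) (update h0 d u) rfl
            (hvalid _ _ d (by omega) (by omega) rfl rfl)).congr fun ω => ?_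
          rw [step_D (o ω).T S0 h0 d a b u hd hb ha hu0 (by omega) (by omega)
            (fun s hs hsd => hb' s hs (by omega))
            (fun s hs hsd => by
              by_contra hlt
              have := hb' s hs (by omega); omega) hmaps0 hbu, show d - b = k by omega]
        · have hka : k = a - b := by omega
          have hins : insert a S0 = S0 := Finset.insert_eq_of_mem ha
          refine (ih (∑ s ∈ S0, s) (by omega) S0 (update h0 a u) rfl
            (hvalid _ _ a (by omega) le_rfl hins.symm rfl)).congr fun ω => ?_
          rw [step_A (o ω).T S0 h0 a b u hb ha hu0 hba hmaps0 hbu (by rw [h0a]; omega), hka]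
    obtain ⟨cf, hcf, hcf'⟩ := inSpan_all (fun ω => (o ω).K) (a - b)
      (fun φ ω => ((if u + a ≤ c + (b + φ) then
        gbn (o ω).K.F (v - (u + a - (b + φ))) (c - (u + a - (b + φ))) else 0 : ℕ) : ℚ))
      (fun φ => by
        by_cases hif : u + a ≤ c + (b + φ)
        · simp only [if_pos hif]; exact PC_gbn _ _ _
        · simp only [if_neg hif]; exact PC.const _)
    have hpc : PC (fun ω => (o ω).K.q) (fun ω => ∑ k ∈ Finset.range (a - b + 1), cf k ω *
        ((∑ Y ∈ (Fl_finite (o ω).T S0 h0).toFinset,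
          gbn (o ω).K.F (finrank (o ω).K.F ↥(Y a ⊓ (Y u).comap (o ω).T) - b) k : ℕ) : ℚ)) :=
      PC.sum _ (fun k ω => cf k ω *
        ((∑ Y ∈ (Fl_finite (o ω).T S0 h0).toFinset,
          gbn (o ω).K.F (finrank (o ω).K.F ↥(Y a ⊓ (Y u).comap (o ω).T) - b) k : ℕ) : ℚ))
        fun k hk' => (hcf k).mul (hk k (by simp at hk'; omega))
    refine hpc.congr fun ω => ?_
    rw [← hSS, step_C (o ω).T S0 h a c u v hcS0 hu0 hv0 huc hcv hu0' hv0' hmaps hcv' ha hhac hac]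
    push_cast
    simp only [Finset.mul_sum]
    rw [Finset.sum_comm]
    refine Finset.sum_congr rfl fun Y hY => ?_
    rw [Set.Finite.mem_toFinset] at hY
    have hle : Y b ≤ Y a ⊓ (Y u).comap (o ω).T := by
      refine le_inf (hY.2.2.1 b hb a ha (by omega)) ?_
      rw [← Submodule.map_le_iff_le_comap]
      exact (hY.2.2.2 b hb).trans (hY.2.2.1 _ (hmaps0 b hb) u hu0 hbu)
    have h1 := Submodule.finrank_mono hle
    rw [hY.2.1 b hb] at h1
    have h2 := Submodule.finrank_mono (inf_le_left : Y a ⊓ (Y u).comap (o ω).T ≤ Y a)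
    rw [hY.2.1 a ha] at h2
    have h3 := hcf' ω (finrank (o ω).K.F ↥(Y a ⊓ (Y u).comap (o ω).T) - b) (by omega)
    beta_reduce at h3
    rw [← h3]
    rw [show b + (finrank (o ω).K.F ↥(Y a ⊓ (Y u).comap (o ω).T) - b) =
      finrank (o ω).K.F ↥(Y a ⊓ (Y u).comap (o ω).T) by omega]
    push_cast
    rfl

end part3

section part4

open Polynomial Module Function

section rfl_flags
variable {R A B : Type*} [Ring R] [AddCommGroup A] [Module R A] [AddCommGroup B] [Module R B]

def RFl (R A : Type*) [Ring R] [AddCommGroup A] [Module R A] (q : ℕ) (S : Finset ℕ) :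
    Set (ℕ → Submodule R A) :=
  {X | (∀ s, s ∉ S → X s = ⊥) ∧ (∀ s ∈ S, Nat.card (X s) = q ^ s) ∧
    (∀ s ∈ S, ∀ t ∈ S, s ≤ t → X s ≤ X t)}

lemma RFl_finite [Finite A] (q : ℕ) (S : Finset ℕ) : (RFl R A q S).Finite := by
  have := finite_submodule (R := R) (B := A)
  refine Set.Finite.of_finite_image (f := fun X => fun s : S => X s) (Set.toFinite _) ?_
  intro X hX Y hY hXY
  funext s
  by_cases hs : s ∈ S
  · exact congrFun hXY ⟨s, hs⟩
  · rw [hX.1 s hs, hY.1 s hs]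

lemma card_map_inj (f : A →ₗ[R] B) (hf : Injective f) (W : Submodule R A) :
    Nat.card (W.map f) = Nat.card W :=
  (Nat.card_congr (W.equivMapOfInjective f hf).toEquiv).symm

lemma RFl_congr (e : A ≃ₗ[R] B) (q : ℕ) (S : Finset ℕ) :
    (RFl R A q S).ncard = (RFl R B q S).ncard := by
  refine Set.ncard_congr (fun X _ s => (X s).map e.toLinearMap) ?_ ?_ ?_
  · rintro X ⟨h1, h2, h3⟩
    refine ⟨fun s hs => by simp [h1 s hs], fun s hs => ?_, fun s hs t ht hst =>
      Submodule.map_mono (h3 s hs t ht hst)⟩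
    rw [← h2 s hs]
    exact card_map_inj _ e.injective _
  · intro X Y _ _ h
    funext s
    exact Submodule.map_injective_of_injective (f := e.toLinearMap) e.injective (congrFun h s)
  · rintro Y ⟨h1, h2, h3⟩
    refine ⟨fun s => (Y s).map e.symm.toLinearMap, ⟨fun s hs => by simp [h1 s hs], fun s hs => ?_,
      fun s hs t ht hst => Submodule.map_mono (h3 s hs t ht hst)⟩, ?_⟩
    · rw [← h2 s hs]
      exact card_map_inj _ e.symm.injective _
    · funext s
      rw [← Submodule.map_comp]
      simp

lemma RFl_fiber (q : ℕ) (S : Finset ℕ) (t : ℕ) (ht : ∀ s ∈ S, s < t) (W : Submodule R A)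
    (hW : Nat.card W = q ^ t) :
    {X | X ∈ RFl R A q (insert t S) ∧ X t = W}.ncard = (RFl R W q S).ncard := by
  have htS : t ∉ S := fun h => (ht t h).false
  have hne : ∀ s ∈ S, s ≠ t := fun s hs => (ht s hs).ne
  have hmap : ∀ U : Submodule R W, U.map W.subtype ≤ W := fun U => Submodule.map_subtype_le _ _
  symm
  refine Set.ncard_congr (fun Y _ => update (fun s => (Y s).map W.subtype) t W) ?_ ?_ ?_
  · rintro Y ⟨h1, h2, h3⟩
    refine ⟨⟨?_, ?_, ?_⟩, by simp⟩
    · intro s hs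
      have hs' : s ≠ t ∧ s ∉ S := by simpa using hs
      rw [update_of_ne hs'.1, h1 s hs'.2, Submodule.map_bot]
    · intro s hs
      rcases Finset.mem_insert.1 hs with rfl | hs
      · rw [update_self, hW]
      · rw [update_of_ne (hne s hs), ← h2 s hs]
        exact card_map_inj _ W.injective_subtype _
    · intro s hs u hu hsu
      rcases Finset.mem_insert.1 hu with e | hu1
      · subst e
        rw [update_self]
        rcases Finset.mem_insert.1 hs with e | hs
        · subst e; rw [update_self]
        · rw [update_of_ne (hne s hs)]; exact hmap _
      · rcases Finset.mem_insert.1 hs with e | hs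
        · have := ht u hu1; omega
        · rw [update_of_ne (hne s hs), update_of_ne (hne u hu1)]
          exact Submodule.map_mono (h3 s hs u hu1 hsu)
  · rintro Y Y' hY hY' h
    funext s
    by_cases hs : s ∈ S
    · have := congrFun h s
      simp only [update_of_ne (hne s hs)] at this
      exact Submodule.map_injective_of_injective W.injective_subtype this
    · rw [hY.1 s hs, hY'.1 s hs]
  · rintro X ⟨⟨h1, h2, h3⟩, rfl⟩
    have hle : ∀ s ∈ S, X s ≤ X t := fun s hs =>
      h3 s (by simp [hs]) t (by simp) (ht s hs).le
    have hmc : ∀ s ∈ S, ((X s).comap (X t).subtype).map (X t).subtype = X s := fun s hs => by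
      rw [Submodule.map_comap_subtype]; exact inf_eq_right.2 (hle s hs)
    refine ⟨fun s => if s ∈ S then (X s).comap (X t).subtype else ⊥, ⟨?_, ?_, ?_⟩, ?_⟩
    · intro s hs; simp [hs]
    · intro s hs
      simp only [hs, if_true]
      rw [← h2 s (by simp [hs])]
      conv_rhs => rw [← hmc s hs]
      exact (card_map_inj _ (X t).injective_subtype _).symm
    · intro s hs u hu hsu
      simp only [hs, hu, if_true]
      exact Submodule.comap_mono (h3 s (by simp [hs]) u (by simp [hu]) hsu)
    · funext s
      by_cases hst : s = t
      · subst hst; simp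
      · rw [update_of_ne hst]
        by_cases hs : s ∈ S
        · simp only [hs, if_true]; exact hmc s hs
        · simp only [hs, if_false, Submodule.map_bot]
          exact (h1 s (by simp [hst, hs])).symm

end rfl_flags

/-- families of finite modules closed under submodules -/
structure Sys (Ω : Type*) (ι : Type) where
  q : Ω → ℕ
  q2 : ∀ ω, 2 ≤ q ω
  R : Ω → Type
  [ring : ∀ ω, Ring (R ω)]
  M : Ω → ι → Type
  [acg : ∀ ω i, AddCommGroup (M ω i)]
  [mod : ∀ ω i, Module (R ω) (M ω i)]
  [fin : ∀ ω i, Finite (M ω i)]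
  size : ι → ℕ
  card : ∀ ω i, Nat.card (M ω i) = q ω ^ size i
  ffin : ∀ n, {i | size i ≤ n}.Finite
  sub : ∀ ω i (W : Submodule (R ω) (M ω i)), ∃ j, Nonempty (M ω j ≃ₗ[R ω] W)
  uniq : ∀ ω i j, Nonempty (M ω i ≃ₗ[R ω] M ω j) → i = j
  hom : ∀ i j, PC q (fun ω => (Nat.card (M ω i →ₗ[R ω] M ω j) : ℚ))

namespace Sys
attribute [instance] Sys.ring Sys.acg Sys.mod Sys.fin
variable {Ω : Type*} {ι : Type} (Y : Sys Ω ι)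

noncomputable def typ (ω : Ω) (j : ι) (W : Submodule (Y.R ω) (Y.M ω j)) : ι := (Y.sub ω j W).choose

lemma typ_spec (ω : Ω) (j : ι) (W : Submodule (Y.R ω) (Y.M ω j)) :
    Nonempty (Y.M ω (Y.typ ω j W) ≃ₗ[Y.R ω] W) := (Y.sub ω j W).choose_spec

lemma typ_eq (ω : Ω) (j : ι) (W : Submodule (Y.R ω) (Y.M ω j)) (l : ι) :
    Y.typ ω j W = l ↔ Nonempty (Y.M ω l ≃ₗ[Y.R ω] W) := by
  constructor
  · rintro rfl; exact Y.typ_spec ω j W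
  · rintro ⟨e⟩
    obtain ⟨e'⟩ := Y.typ_spec ω j W
    exact Y.uniq ω _ _ ⟨e'.trans e.symm⟩

lemma size_le_of_card {ω : Ω} {i j : ι} (h : Nat.card (Y.M ω i) ≤ Nat.card (Y.M ω j)) :
    Y.size i ≤ Y.size j := by
  rw [Y.card, Y.card] at h
  exact (Nat.pow_le_pow_iff_right (Y.q2 ω)).1 h

lemma card_of_size {ω : Ω} {i j : ι} (h : Y.size i = Y.size j) :
    Nat.card (Y.M ω i) = Nat.card (Y.M ω j) := by
  rw [Y.card, Y.card, h]

lemma typ_size (ω : Ω) (j : ι) (W : Submodule (Y.R ω) (Y.M ω j)) :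
    Nat.card W = Y.q ω ^ Y.size (Y.typ ω j W) := by
  obtain ⟨e⟩ := Y.typ_spec ω j W
  rw [← Y.card, Nat.card_congr e.toEquiv]

lemma typ_le (ω : Ω) (j : ι) (W : Submodule (Y.R ω) (Y.M ω j)) :
    Y.size (Y.typ ω j W) ≤ Y.size j := by
  apply Y.size_le_of_card (ω := ω)
  obtain ⟨e⟩ := Y.typ_spec ω j W
  rw [Nat.card_congr e.toEquiv]
  exact Nat.card_le_card_of_injective _ W.injective_subtype

noncomputable def upto (n : ℕ) : Finset ι := (Y.ffin n).toFinset

lemma mem_upto (n : ℕ) (i : ι) : i ∈ Y.upto n ↔ Y.size i ≤ n := by simp [upto]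

lemma sum_types (ω : Ω) (j : ι) (n : ℕ) (hn : Y.size j ≤ n) (G : ι → ℕ)
    (s : Finset (Submodule (Y.R ω) (Y.M ω j))) (hs : ∀ W, W ∈ s) :
    ∑ W ∈ s, G (Y.typ ω j W) = ∑ l ∈ Y.upto n, (subS (Y.R ω) (Y.M ω l) (Y.M ω j)).ncard * G l := by
  classical
  rw [← Finset.sum_fiberwise_of_maps_to (s := s) (t := Y.upto n) (g := fun W => Y.typ ω j W)
    (fun W _ => (Y.mem_upto _ _).2 ((Y.typ_le ω j W).trans hn))]
  refine Finset.sum_congr rfl fun l _ => ?_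
  rw [Finset.sum_congr rfl (g := fun _ => G l) (fun W hW => by rw [(Finset.mem_filter.1 hW).2]),
    Finset.sum_const, smul_eq_mul]
  congr 1
  rw [← Set.ncard_coe_finset]
  congr 1
  ext W
  simp only [Finset.coe_filter, hs, true_and, Set.mem_ofPred_eq, subS]
  exact Y.typ_eq ω j W l

lemma hom_eq (ω : Ω) (i j : ι) (n : ℕ) (hn : Y.size j ≤ n) :
    Nat.card (Y.M ω i →ₗ[Y.R ω] Y.M ω j) = ∑ l ∈ Y.upto n,
      (subS (Y.R ω) (Y.M ω l) (Y.M ω j)).ncard * (surjS (Y.R ω) (Y.M ω i) (Y.M ω l)).ncard := by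
  classical
  haveI := finite_submodule (R := Y.R ω) (B := Y.M ω j)
  haveI := finite_hom (R := Y.R ω) (A := Y.M ω i) (B := Y.M ω j)
  haveI := Fintype.ofFinite (Submodule (Y.R ω) (Y.M ω j))
  rw [← Y.sum_types ω j n hn _ Finset.univ (fun W => Finset.mem_univ _), ← Set.ncard_univ,
    ncard_fiber Set.univ (Set.toFinite _) Finset.univ (fun f => LinearMap.range f)
      (fun f _ => Finset.mem_univ _)]
  refine Finset.sum_congr rfl fun W _ => ?_
  obtain ⟨e⟩ := Y.typ_spec ω j W
  rw [← card_range_eq W e]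
  simp

lemma surj_zero (ω : Ω) (i l : ι) (h : Y.size i ≤ Y.size l) (hne : l ≠ i) :
    (surjS (Y.R ω) (Y.M ω i) (Y.M ω l)).ncard = 0 := by
  have : surjS (Y.R ω) (Y.M ω i) (Y.M ω l) = ∅ := by
    rw [Set.eq_empty_iff_forall_notMem]
    intro f hf
    have h1 := Y.size_le_of_card (Nat.card_le_card_of_surjective f hf)
    have hb : Bijective f := hf.bijective_of_nat_card_le
      (Y.card_of_size (by omega)).le
    exact hne (Y.uniq ω _ _ ⟨(LinearEquiv.ofBijective f hb).symm⟩)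
  rw [this, Set.ncard_empty]

lemma sub_top (ω : Ω) (i l : ι) (h : Y.size i ≤ Y.size l) (W : Submodule (Y.R ω) (Y.M ω i))
    (hW : W ∈ subS (Y.R ω) (Y.M ω l) (Y.M ω i)) : W = ⊤ ∧ l = i := by
  obtain ⟨e⟩ := hW
  have hi : Injective (W.subtype ∘ₗ e.toLinearMap) := W.injective_subtype.comp e.injective
  have h1 := Y.size_le_of_card (Nat.card_le_card_of_injective _ hi)
  have hb : Bijective (W.subtype ∘ₗ e.toLinearMap) := hi.bijective_of_nat_card_le
      (Y.card_of_size (by omega)).le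
  refine ⟨?_, Y.uniq ω _ _ ⟨LinearEquiv.ofBijective _ hb⟩⟩
  rw [eq_top_iff]
  intro x _
  obtain ⟨y, hy⟩ := hb.2 x
  rw [← hy]
  exact (e y).2

lemma sub_zero (ω : Ω) (i l : ι) (h : Y.size i ≤ Y.size l) (hne : l ≠ i) :
    (subS (Y.R ω) (Y.M ω l) (Y.M ω i)).ncard = 0 := by
  have : subS (Y.R ω) (Y.M ω l) (Y.M ω i) = ∅ := by
    rw [Set.eq_empty_iff_forall_notMem]
    intro W hW
    exact hne (Y.sub_top ω i l h W hW).2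
  rw [this, Set.ncard_empty]

lemma sub_self (ω : Ω) (i : ι) : (subS (Y.R ω) (Y.M ω i) (Y.M ω i)).ncard = 1 := by
  rw [Set.ncard_eq_one]
  refine ⟨⊤, ?_⟩
  ext W
  constructor
  · intro hW; exact (Y.sub_top ω i i le_rfl W hW).1
  · rintro rfl; exact ⟨Submodule.topEquiv.symm⟩

lemma surj_self (ω : Ω) (i : ι) : (surjS (Y.R ω) (Y.M ω i) (Y.M ω i)).ncard =
    (injS (Y.R ω) (Y.M ω i) (Y.M ω i)).ncard := by
  congr 1
  ext f
  exact Finite.injective_iff_surjective.symm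

/-- the split of the identity -/
lemma hom_split1 (ω : Ω) (i j : ι) (n : ℕ) (hn : Y.size j ≤ n) (hi : Y.size i ≤ n) :
    Nat.card (Y.M ω i →ₗ[Y.R ω] Y.M ω j) = (injS (Y.R ω) (Y.M ω i) (Y.M ω j)).ncard +
      ∑ l ∈ (Y.upto n).filter (fun l => Y.size l < Y.size i),
      (subS (Y.R ω) (Y.M ω l) (Y.M ω j)).ncard * (surjS (Y.R ω) (Y.M ω i) (Y.M ω l)).ncard := by
  classical
  rw [Y.hom_eq ω i j n hn, ← Finset.sum_filter_add_sum_filter_not _ (fun l => Y.size l < Y.size i),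
    add_comm]
  congr 1
  rw [Finset.sum_eq_single_of_mem i (by simp [Y.mem_upto, hi]) (fun l hl hne => by
    rw [Y.surj_zero ω i l (by simpa using (Finset.mem_filter.1 hl).2) hne, mul_zero])]
  rw [surj_self, mul_comm, card_sub_mul]

lemma hom_split2 (ω : Ω) (i j : ι) (n : ℕ) (hn : Y.size j ≤ n) :
    Nat.card (Y.M ω i →ₗ[Y.R ω] Y.M ω j) = (surjS (Y.R ω) (Y.M ω i) (Y.M ω j)).ncard +
      ∑ l ∈ (Y.upto n).filter (fun l => Y.size l < Y.size j),
      (subS (Y.R ω) (Y.M ω l) (Y.M ω j)).ncard * (surjS (Y.R ω) (Y.M ω i) (Y.M ω l)).ncard := by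
  classical
  rw [Y.hom_eq ω i j n hn, ← Finset.sum_filter_add_sum_filter_not _ (fun l => Y.size l < Y.size j),
    add_comm]
  congr 1
  rw [Finset.sum_eq_single_of_mem j (by simp [Y.mem_upto, hn]) (fun l hl hne => by
    rw [Y.sub_zero ω j l (by simpa using (Finset.mem_filter.1 hl).2) hne, zero_mul])]
  rw [sub_self, one_mul]

lemma PC_sub_of (i j : ι)
    (h : ∀ j, PC Y.q (fun ω => ((injS (Y.R ω) (Y.M ω i) (Y.M ω j)).ncard : ℚ))) :
    PC Y.q (fun ω => ((subS (Y.R ω) (Y.M ω i) (Y.M ω j)).ncard : ℚ)) := by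
  refine PC.div_nat (D := fun ω => (injS (Y.R ω) (Y.M ω i) (Y.M ω i)).ncard) (h i) ?_
    (fun ω => injS_ncard_pos)
  refine (h j).congr fun ω => ?_
  rw [card_sub_mul]

lemma PC_main (n : ℕ) : (∀ i, Y.size i = n → ∀ j,
      PC Y.q (fun ω => ((injS (Y.R ω) (Y.M ω i) (Y.M ω j)).ncard : ℚ))) ∧
    (∀ i, Y.size i = n → ∀ j,
      PC Y.q (fun ω => ((surjS (Y.R ω) (Y.M ω j) (Y.M ω i)).ncard : ℚ))) := by
  induction n using Nat.strong_induction_on with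
  | _ n ih =>
  have hsum : ∀ i j, ∀ s : Finset ι, (∀ l ∈ s, Y.size l < n) →
      PC Y.q (fun ω => ((∑ l ∈ s, (subS (Y.R ω) (Y.M ω l) (Y.M ω j)).ncard *
        (surjS (Y.R ω) (Y.M ω i) (Y.M ω l)).ncard : ℕ) : ℚ)) := by
    intro i j s hs
    refine (PC.sum s (fun l ω => ((subS (Y.R ω) (Y.M ω l) (Y.M ω j)).ncard : ℚ) *
        (surjS (Y.R ω) (Y.M ω i) (Y.M ω l)).ncard) fun l hl => ?_).congr fun ω => by push_cast; rfl
    have := ih _ (hs l hl)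
    exact (Y.PC_sub_of l j (this.1 l rfl)).mul (this.2 l rfl i)
  constructor
  · intro i hi j
    refine ((Y.hom i j).sub (hsum i j ((Y.upto (Y.size i + Y.size j)).filter
      (fun l => Y.size l < Y.size i)) fun l hl => ?_)).congr fun ω => ?_
    · rw [← hi]; exact (Finset.mem_filter.1 hl).2
    · rw [Y.hom_split1 ω i j (Y.size i + Y.size j) (by omega) (by omega)]
      push_cast; ring
  · intro i hi j
    refine ((Y.hom j i).sub (hsum j i ((Y.upto (Y.size i)).filter
      (fun l => Y.size l < Y.size i)) fun l hl => ?_)).congr fun ω => ?_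
    · rw [← hi]; exact (Finset.mem_filter.1 hl).2
    · rw [Y.hom_split2 ω j i (Y.size i) le_rfl]
      push_cast; ring

lemma PC_sub (i j : ι) : PC Y.q (fun ω => ((subS (Y.R ω) (Y.M ω i) (Y.M ω j)).ncard : ℚ)) :=
  Y.PC_sub_of i j ((Y.PC_main _).1 i rfl)

theorem PC_flags (S : Finset ℕ) : ∀ i,
    PC Y.q (fun ω => ((RFl (Y.R ω) (Y.M ω i) (Y.q ω) S).ncard : ℚ)) := by
  classical
  induction S using Finset.induction_on_max with
  | empty =>
    intro i
    refine (PC.const 1).congr fun ω => ?_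
    have : RFl (Y.R ω) (Y.M ω i) (Y.q ω) ∅ = {fun _ => ⊥} := by
      ext X
      simp [RFl, funext_iff]
    rw [this]; simp
  | insert t S ht ih =>
    intro i
    have h := PC.sum (q := Y.q) (Y.upto (Y.size i)) (fun l ω =>
      ((subS (Y.R ω) (Y.M ω l) (Y.M ω i)).ncard : ℚ) * (if Y.size l = t then
        ((RFl (Y.R ω) (Y.M ω l) (Y.q ω) S).ncard : ℚ) else 0)) (fun l _ => by
          refine (Y.PC_sub l i).mul ?_
          by_cases hl : Y.size l = t
          · simp only [hl, if_true]; exact ih l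
          · simp only [hl, if_false]; exact PC.const 0)
    refine h.congr fun ω => ?_
    haveI := finite_submodule (R := Y.R ω) (B := Y.M ω i)
    haveI := Fintype.ofFinite (Submodule (Y.R ω) (Y.M ω i))
    have h2 := Y.sum_types ω i (Y.size i) le_rfl (fun l => if Y.size l = t then
        ((RFl (Y.R ω) (Y.M ω l) (Y.q ω) S).ncard) else 0) Finset.univ (fun W => Finset.mem_univ _)
    have h3 : (RFl (Y.R ω) (Y.M ω i) (Y.q ω) (insert t S)).ncard =
      ∑ W : Submodule (Y.R ω) (Y.M ω i), if Y.size (Y.typ ω i W) = t then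
        ((RFl (Y.R ω) (Y.M ω (Y.typ ω i W)) (Y.q ω) S).ncard) else 0 := by
      rw [ncard_fiber _ (RFl_finite _ _) Finset.univ (fun X => X t) (fun X _ => Finset.mem_univ _)]
      refine Finset.sum_congr rfl fun W _ => ?_
      split_ifs with hW
      · rw [RFl_fiber _ S t ht W (by rw [Y.typ_size, hW])]
        obtain ⟨e⟩ := Y.typ_spec ω i W
        exact (RFl_congr e _ _).symm
      · have : {X | X ∈ RFl (Y.R ω) (Y.M ω i) (Y.q ω) (insert t S) ∧ X t = W} = ∅ := by
          rw [Set.eq_empty_iff_forall_notMem]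
          rintro X ⟨hX, rfl⟩
          have := hX.2.1 t (by simp)
          rw [Y.typ_size] at this
          exact hW (Nat.pow_right_injective (Y.q2 ω) this)
        rw [this, Set.ncard_empty]
    rw [h3, h2]
    push_cast
    rfl

end Sys

end part4

section part5

open Polynomial Module Function

section cyc
variable {F : Type} [Field F] [Fintype F]

lemma cyc_finite (f : F[X]) (hf : f ≠ 0) : Finite (F[X] ⧸ Ideal.span {f}) := by
  haveI : Module.Finite F (F[X] ⧸ Ideal.span {f}) :=
    PowerBasis.finite (AdjoinRoot.powerBasis hf)
  exact Module.finite_of_finite F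

lemma cyc_card (f : F[X]) (hf : f ≠ 0) :
    Nat.card (F[X] ⧸ Ideal.span {f}) = Fintype.card F ^ f.natDegree := by
  haveI : Module.Finite F (F[X] ⧸ Ideal.span {f}) :=
    PowerBasis.finite (AdjoinRoot.powerBasis hf)
  rw [Module.natCard_eq_pow_finrank (K := F), finrank_quotient_span_eq_natDegree,
    Nat.card_eq_fintype_card]

lemma mk_smul_eq_zero (f g r : F[X]) :
    g • (Ideal.Quotient.mk (Ideal.span {f}) r) = 0 ↔ f ∣ g * r := by
  rw [← Ideal.Quotient.mk_eq_mk, ← Submodule.Quotient.mk_smul, Submodule.Quotient.mk_eq_zero,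
    smul_eq_mul, Ideal.mem_span_singleton]

lemma ker_card_same (p : F[X]) (hp : p ≠ 0) (j b : ℕ) :
    Nat.card {z : F[X] ⧸ Ideal.span {p ^ b} // p ^ j • z = 0} =
      Fintype.card F ^ (p.natDegree * min j b) := by
  rcases le_total b j with h | h
  · rw [min_eq_right h, mul_comm, ← natDegree_pow, ← cyc_card _ (pow_ne_zero _ hp)]
    refine Nat.card_congr (Equiv.subtypeUnivEquiv fun z => ?_)
    obtain ⟨r, rfl⟩ := Ideal.Quotient.mk_surjective z
    rw [mk_smul_eq_zero]
    exact (pow_dvd_pow p h).mul_right r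
  · rw [min_eq_left h, mul_comm, ← natDegree_pow, ← cyc_card _ (pow_ne_zero _ hp)]
    have hb : p ^ b = p ^ j * p ^ (b - j) := by rw [← pow_add]; congr 1; omega
    let φ : F[X] →ₗ[F[X]] (F[X] ⧸ Ideal.span {p ^ b}) :=
      LinearMap.toSpanSingleton F[X] _ (Ideal.Quotient.mk _ (p ^ (b - j)))
    have hφ : ∀ r, φ r = r • (Ideal.Quotient.mk _ (p ^ (b - j))) := fun r => by
      simp only [φ, LinearMap.toSpanSingleton_apply]
    have hker : LinearMap.ker φ = Ideal.span {p ^ j} := by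
      ext r
      rw [LinearMap.mem_ker, hφ, mk_smul_eq_zero, Ideal.mem_span_singleton, hb,
        mul_dvd_mul_iff_right (pow_ne_zero _ hp)]
    have hran : ∀ z, z ∈ LinearMap.range φ ↔ p ^ j • z = 0 := by
      intro z
      obtain ⟨r, rfl⟩ := Ideal.Quotient.mk_surjective z
      rw [mk_smul_eq_zero, show p ^ b ∣ p ^ j * r ↔ p ^ (b - j) ∣ r by
        rw [hb, mul_dvd_mul_iff_left (pow_ne_zero _ hp)]]
      constructor
      · rintro ⟨s, hs⟩
        rw [hφ, ← Ideal.Quotient.mk_eq_mk, ← Submodule.Quotient.mk_smul, ← Ideal.Quotient.mk_eq_mk,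
          Submodule.Quotient.eq, Ideal.mem_span_singleton, smul_eq_mul] at hs
        have h1 : p ^ (b - j) ∣ s * p ^ (b - j) - r := (pow_dvd_pow p (by omega)).trans hs
        have h2 : p ^ (b - j) ∣ s * p ^ (b - j) := Dvd.intro_left _ rfl
        have h3 := dvd_sub h2 h1
        rwa [sub_sub_cancel] at h3
      · rintro ⟨s, rfl⟩
        refine ⟨s, ?_⟩
        rw [hφ, ← Ideal.Quotient.mk_eq_mk, ← Submodule.Quotient.mk_smul, Ideal.Quotient.mk_eq_mk,
          smul_eq_mul, mul_comm]
    have e : (F[X] ⧸ Ideal.span {p ^ j}) ≃ₗ[F[X]] LinearMap.range φ :=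
      (Submodule.quotEquivOfEq _ _ hker.symm).trans φ.quotKerEquivRange
    exact (Nat.card_congr (e.toEquiv.trans (Equiv.subtypeEquivRight hran))).symm

lemma ker_triv (f g : F[X]) (h : IsCoprime f g) (z : F[X] ⧸ Ideal.span {f}) (hz : g • z = 0) :
    z = 0 := by
  obtain ⟨r, rfl⟩ := Ideal.Quotient.mk_surjective z
  rw [mk_smul_eq_zero] at hz
  rw [Ideal.Quotient.eq_zero_iff_mem, Ideal.mem_span_singleton]
  exact h.dvd_of_dvd_mul_left hz

lemma ker_card_coprime (f g : F[X]) (h : IsCoprime f g) :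
    Nat.card {z : F[X] ⧸ Ideal.span {f} // g • z = 0} = 1 := by
  rw [Nat.card_eq_one_iff_unique]
  refine ⟨⟨fun a b => Subtype.ext ?_⟩, ⟨0, smul_zero _⟩⟩
  rw [ker_triv f g h a a.2, ker_triv f g h b b.2]

lemma hom_cyc_card {M : Type*} [AddCommGroup M] [Module F[X] M] (f : F[X]) :
    Nat.card ((F[X] ⧸ Ideal.span {f}) →ₗ[F[X]] M) = Nat.card {z : M // f • z = 0} := by
  refine Nat.card_eq_of_bijective (fun φ => ⟨φ (Ideal.Quotient.mk _ 1), ?_⟩) ⟨?_, ?_⟩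
  · rw [← map_smul, (mk_smul_eq_zero f f 1).2 (by simp), map_zero]
  · intro φ ψ h
    apply Submodule.linearMap_qext
    ext
    simpa using congrArg Subtype.val h
  · rintro ⟨z, hz⟩
    refine ⟨Submodule.liftQ (Ideal.span {f}) (LinearMap.toSpanSingleton F[X] M z) ?_, ?_⟩
    · rw [Ideal.span, Submodule.span_singleton_le_iff_mem, LinearMap.mem_ker,
        LinearMap.toSpanSingleton_apply, hz]
    · apply Subtype.ext
      simp only
      rw [← Ideal.Quotient.mk_eq_mk]
      erw [Submodule.liftQ_apply]
      rw [LinearMap.toSpanSingleton_apply, one_smul]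

lemma ker_pi_card {ι : Type*} [Fintype ι] (A : ι → Type*) [∀ i, AddCommGroup (A i)]
    [∀ i, Module F[X] (A i)] (f : F[X]) :
    Nat.card {z : ∀ i, A i // f • z = 0} = ∏ i, Nat.card {z : A i // f • z = 0} := by
  rw [← Nat.card_pi]
  refine Nat.card_congr ((Equiv.subtypeEquivRight fun z => ?_).trans
    (Equiv.subtypePiEquivPi (p := fun i (z : A i) => f • z = 0)))
  rw [funext_iff]; rfl

lemma hom_pi_card {ι : Type*} [Fintype ι] (A : ι → Type*) [∀ i, AddCommGroup (A i)]
    [∀ i, Module F[X] (A i)] (M : Type*) [AddCommGroup M] [Module F[X] M] :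
    Nat.card ((∀ i, A i) →ₗ[F[X]] M) = ∏ i, Nat.card (A i →ₗ[F[X]] M) := by
  classical
  rw [← Nat.card_pi]
  exact (Nat.card_congr (LinearMap.lsum F[X] A F[X] (M := M)).toEquiv).symm

end cyc

structure Ctx (k : ℕ) (d : Fin k → ℕ) : Type 1 where
  K : FF
  p : Fin k → K.F[X]
  monic : ∀ i, (p i).Monic
  irr : ∀ i, Irreducible (p i)
  inj : Injective p
  deg : ∀ i, (p i).natDegree = d i

namespace Ctx
variable {k : ℕ} {d : Fin k → ℕ} {N : ℕ} (c : Ctx k d)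

abbrev Cyc (x : Fin k × Fin N) : Type := c.K.F[X] ⧸ Ideal.span {c.p x.1 ^ (x.2.1 + 1)}

abbrev Mdl (m : Fin k × Fin N → ℕ) : Type := ∀ z : (Σ x, Fin (m x)), c.Cyc z.1

lemma p_ne (i : Fin k) : c.p i ≠ 0 := (c.irr i).ne_zero

instance (x : Fin k × Fin N) : Finite (c.Cyc x) := cyc_finite _ (pow_ne_zero _ (c.p_ne _))

lemma coprime {i j : Fin k} (h : i ≠ j) : IsCoprime (c.p i) (c.p j) := by
  rw [(c.irr i).coprime_iff_not_dvd]
  intro hd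
  have := (c.irr i).associated_of_dvd (c.irr j) hd
  exact h (c.inj (eq_of_monic_of_associated (c.monic i) (c.monic j) this))

end Ctx

def kap {k N : ℕ} (d : Fin k → ℕ) (i : Fin k) (j : ℕ) (x : Fin k × Fin N) : ℕ :=
  if x.1 = i then d i * min j (x.2.1 + 1) else 0

def kapS {k N : ℕ} (d : Fin k → ℕ) (i : Fin k) (j : ℕ) (m : Fin k × Fin N → ℕ) : ℕ :=
  ∑ x, m x * kap d i j x

namespace Ctx
variable {k : ℕ} {d : Fin k → ℕ} {N : ℕ} (c : Ctx k d)

lemma ker_cyc (i : Fin k) (j : ℕ) (x : Fin k × Fin N) :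
    Nat.card {z : c.Cyc x // c.p i ^ j • z = 0} = c.K.q ^ kap d i j x := by
  unfold kap
  split_ifs with h
  · subst h
    rw [ker_card_same _ (c.p_ne _), c.deg]; rfl
  · rw [ker_card_coprime _ _ (c.coprime h).pow, pow_zero]

lemma sigma_prod (m : Fin k × Fin N → ℕ) (q : ℕ) (g : Fin k × Fin N → ℕ) :
    ∏ z : (Σ x, Fin (m x)), q ^ g z.1 = q ^ ∑ x, m x * g x := by
  rw [Finset.prod_pow_eq_pow_sum]
  congr 1
  rw [Fintype.sum_sigma]
  simp

lemma ker_mdl (i : Fin k) (j : ℕ) (m : Fin k × Fin N → ℕ) :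
    Nat.card {z : c.Mdl m // c.p i ^ j • z = 0} = c.K.q ^ kapS d i j m := by
  refine (ker_pi_card (fun z : (Σ x, Fin (m x)) => c.Cyc z.1) (c.p i ^ j)).trans ?_
  simp only [ker_cyc]
  rw [sigma_prod]; rfl

lemma hom_mdl (m m' : Fin k × Fin N → ℕ) :
    Nat.card (c.Mdl m →ₗ[c.K.F[X]] c.Mdl m') =
      c.K.q ^ ∑ x, m x * kapS d x.1 (x.2.1 + 1) m' := by
  rw [hom_pi_card]
  simp only [hom_cyc_card, ker_mdl]
  rw [sigma_prod _ _ (fun x => kapS d x.1 (x.2.1 + 1) m')]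

lemma card_mdl (m : Fin k × Fin N → ℕ) :
    Nat.card (c.Mdl m) = c.K.q ^ ∑ x, m x * (d x.1 * (x.2.1 + 1)) := by
  rw [Nat.card_pi, ← sigma_prod]
  refine Finset.prod_congr rfl fun z _ => ?_
  rw [cyc_card _ (pow_ne_zero _ (c.p_ne _)), natDegree_pow, c.deg, mul_comm]; rfl

end Ctx

lemma kapS_eq {k N : ℕ} (d : Fin k → ℕ) (i : Fin k) (j : ℕ) (m : Fin k × Fin N → ℕ) :
    kapS d i j m = d i * ∑ a : Fin N, m (i, a) * min j (a.1 + 1) := by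
  unfold kapS kap
  rw [Fintype.sum_prod_type]
  rw [Finset.sum_eq_single i]
  · simp only [if_true]
    rw [Finset.mul_sum]
    exact Finset.sum_congr rfl fun a _ => by ring
  · intro b _ hb
    simp [hb]
  · simp

lemma kapS_inj {k N : ℕ} (d : Fin k → ℕ) (hd : ∀ i, 0 < d i) (m m' : Fin k × Fin N → ℕ)
    (h : ∀ i j, kapS d i j m = kapS d i j m') : m = m' := by
  have h1 : ∀ i j, ∑ a : Fin N, m (i, a) * min j (a.1 + 1) =
      ∑ a : Fin N, m' (i, a) * min j (a.1 + 1) := by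
    intro i j
    have := h i j
    rw [kapS_eq, kapS_eq] at this
    exact Nat.eq_of_mul_eq_mul_left (hd i) this
  have key : ∀ (m : Fin k × Fin N → ℕ) (i : Fin k) (b : Fin N),
      2 * ∑ a : Fin N, m (i, a) * min (b.1 + 1) (a.1 + 1) =
      ∑ a : Fin N, m (i, a) * min b.1 (a.1 + 1) + ∑ a : Fin N, m (i, a) * min (b.1 + 2) (a.1 + 1)
        + m (i, b) := by
    intro m i b
    have : m (i, b) = ∑ a : Fin N, if a = b then m (i, a) else 0 := by simp
    rw [this, Finset.mul_sum, ← Finset.sum_add_distrib, ← Finset.sum_add_distrib]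
    refine Finset.sum_congr rfl fun a _ => ?_
    split_ifs with hab
    · subst hab
      rw [min_self, min_eq_left (by omega), min_eq_right (by omega)]; ring
    · have hab' : a.1 ≠ b.1 := fun e => hab (Fin.ext e)
      rcases lt_or_gt_of_ne hab' with h | h
      · rw [min_eq_right (by omega), min_eq_right (by omega), min_eq_right (by omega)]; ring
      · rw [min_eq_left (by omega), min_eq_left (by omega), min_eq_left (by omega)]; ring
  funext ⟨i, b⟩
  have e1 := key m i b
  have e2 := key m' i b
  rw [h1, h1, h1] at e1
  omega

namespace Ctx
variable {k : ℕ} {d : Fin k → ℕ} {N : ℕ} (c : Ctx k d)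

lemma q2 : 2 ≤ c.K.q := Fintype.one_lt_card

lemma ker_congr {A B : Type*} [AddCommGroup A] [AddCommGroup B] [Module c.K.F[X] A]
    [Module c.K.F[X] B] (e : A ≃ₗ[c.K.F[X]] B) (f : c.K.F[X]) :
    Nat.card {z : A // f • z = 0} = Nat.card {z : B // f • z = 0} := by
  refine Nat.card_congr (e.toEquiv.subtypeEquiv fun z => ?_)
  show _ ↔ f • e z = 0
  rw [← map_smul, LinearEquiv.map_eq_zero_iff]

lemma uniq (m m' : Fin k × Fin N → ℕ) (h : Nonempty (c.Mdl m ≃ₗ[c.K.F[X]] c.Mdl m')) : m = m' := by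
  obtain ⟨e⟩ := h
  refine kapS_inj d (fun i => by rw [← c.deg]; exact (c.irr i).natDegree_pos) m m' fun i j => ?_
  apply Nat.pow_right_injective c.q2
  show c.K.q ^ _ = c.K.q ^ _
  rw [← ker_mdl, ← ker_mdl, c.ker_congr e]

end Ctx

end part5

section part6

open Polynomial Module Function

lemma finite_isTorsion {F : Type} [Field F] (M : Type*) [AddCommGroup M] [Module F[X] M] [Finite M] :
    Module.IsTorsion F[X] M := by
  intro x
  have hn : ¬ Injective (fun r : F[X] => r • x) := not_injective_infinite_finite _
  simp only [Function.Injective, not_forall] at hn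
  obtain ⟨r, s, h, hne⟩ := hn
  refine ⟨⟨r - s, mem_nonZeroDivisors_of_ne_zero (sub_ne_zero.2 hne)⟩, ?_⟩
  show (r - s) • x = 0
  rw [sub_smul]
  exact sub_eq_zero.2 h

namespace Ctx
variable {k : ℕ} {d : Fin k → ℕ} {N : ℕ} (c : Ctx k d)

def H1 (M : Type*) [AddCommGroup M] [Module c.K.F[X] M] : Prop :=
  ∀ π : c.K.F[X], Irreducible π → ∀ z : M, z ≠ 0 → π • z = 0 → ∃ i, Associated π (c.p i)

def H2 (N : ℕ) (M : Type*) [AddCommGroup M] [Module c.K.F[X] M] : Prop :=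
  ∀ i, ∀ z : M, c.p i ^ (N + 1) • z = 0 → c.p i ^ N • z = 0

lemma H1_of_inj {A B : Type*} [AddCommGroup A] [Module c.K.F[X] A] [AddCommGroup B]
    [Module c.K.F[X] B] (f : A →ₗ[c.K.F[X]] B) (hf : Injective f) (h : c.H1 B) : c.H1 A := by
  intro π hπ z hz hz'
  refine h π hπ (f z) (fun h0 => hz (hf (by simpa using h0))) ?_
  rw [← map_smul, hz', map_zero]

lemma H2_of_inj {A B : Type*} [AddCommGroup A] [Module c.K.F[X] A] [AddCommGroup B]
    [Module c.K.F[X] B] (f : A →ₗ[c.K.F[X]] B) (hf : Injective f) (h : c.H2 N B) : c.H2 N A := by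
  intro i z hz
  apply hf
  rw [map_smul, map_zero]
  apply h
  rw [← map_smul, hz, map_zero]

lemma H1_mdl (m : Fin k × Fin N → ℕ) : c.H1 (c.Mdl m) := by
  intro π hπ z hz hz'
  by_contra hne
  push Not at hne
  apply hz
  funext x
  refine ker_triv _ π ?_ (z x) (congrFun hz' x)
  apply IsCoprime.pow_left
  rw [(c.irr _).coprime_iff_not_dvd]
  intro hd
  exact hne _ ((c.irr _).associated_of_dvd hπ hd).symm

lemma H2_mdl (m : Fin k × Fin N → ℕ) : c.H2 N (c.Mdl m) := by
  intro i z hz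
  funext x
  show c.p i ^ N • z x = 0
  have hz' : c.p i ^ (N + 1) • z x = 0 := congrFun hz x
  by_cases hi : x.1.1 = i
  · obtain ⟨r, hr⟩ := Ideal.Quotient.mk_surjective (z x)
    rw [← hr, mk_smul_eq_zero, hi]
    exact (pow_dvd_pow _ x.1.2.2).mul_right _
  · rw [ker_triv _ _ (c.coprime hi).pow (z x) hz', smul_zero]

/-- regrouping -/
lemma regroup {ι : Type} [Fintype ι] (f : ι → Fin k × Fin N) :
    ∃ m : Fin k × Fin N → ℕ, Nonempty ((∀ i, c.Cyc (f i)) ≃ₗ[c.K.F[X]] c.Mdl m) := by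
  classical
  let m : Fin k × Fin N → ℕ := fun x => Fintype.card {i // f i = x}
  let e : (Σ x, Fin (m x)) ≃ ι :=
    (Equiv.sigmaCongrRight fun x => (Fintype.equivFin {i // f i = x}).symm).trans
      (Equiv.sigmaFiberEquiv f)
  have he : ∀ z, f (e z) = z.1 := fun z => by
    simp only [e, Equiv.trans_apply, Equiv.sigmaCongrRight_apply]
    exact ((Fintype.equivFin {i // f i = z.1}).symm z.2).2
  have E : (∀ z, c.Cyc (f (e z))) ≃ₗ[c.K.F[X]] c.Mdl m :=
    LinearEquiv.piCongrRight fun z => Submodule.quotEquivOfEq _ _ (by rw [he])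
  exact ⟨m, ⟨((LinearEquiv.piCongrLeft c.K.F[X] (fun i => c.Cyc (f i)) e).symm.trans E)⟩⟩

lemma drop {R ι : Type*} [Ring R] [Fintype ι] (A : ι → Type*) [∀ i, AddCommGroup (A i)]
    [∀ i, Module R (A i)] (P : ι → Prop) (h : ∀ i, ¬ P i → Subsingleton (A i)) :
    Nonempty ((∀ i, A i) ≃ₗ[R] (∀ i : {i // P i}, A i)) := by
  classical
  refine ⟨LinearEquiv.ofBijective (LinearMap.pi fun i : {i // P i} => LinearMap.proj i.1) ⟨?_, ?_⟩⟩
  · intro x y hxy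
    funext i
    by_cases hi : P i
    · exact congrFun hxy ⟨i, hi⟩
    · haveI := h i hi
      exact Subsingleton.elim _ _
  · intro y
    refine ⟨fun i => if hi : P i then y ⟨i, hi⟩ else 0, ?_⟩
    funext i
    simp [i.2]

lemma classify (M : Type) [AddCommGroup M] [Module c.K.F[X] M] [Finite M] (h1 : c.H1 M)
    (h2 : c.H2 N M) : ∃ m : Fin k × Fin N → ℕ, Nonempty (c.Mdl m ≃ₗ[c.K.F[X]] M) := by
  classical
  obtain ⟨ι, _, π, hπ, e, ⟨E⟩⟩ := Module.equiv_directSum_of_isTorsion (finite_isTorsion (F := c.K.F) M)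
  let A : ι → Type := fun i => c.K.F[X] ⧸ Ideal.span {π i ^ e i}
  have E1 : M ≃ₗ[c.K.F[X]] ∀ i, A i := E.trans (DirectSum.linearEquivFunOnFintype c.K.F[X] ι A)
  have h1' : c.H1 (∀ i, A i) := c.H1_of_inj E1.symm.toLinearMap E1.symm.injective h1
  have h2' : c.H2 N (∀ i, A i) := c.H2_of_inj E1.symm.toLinearMap E1.symm.injective h2
  have h1A : ∀ i, c.H1 (A i) := fun i => c.H1_of_inj (LinearMap.single c.K.F[X] A i)
    (Pi.single_injective (M := A) i) h1'
  have h2A : ∀ i, c.H2 N (A i) := fun i => c.H2_of_inj (LinearMap.single c.K.F[X] A i)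
    (Pi.single_injective (M := A) i) h2'
  obtain ⟨E2⟩ := drop (R := c.K.F[X]) A (fun i => e i ≠ 0) (fun i hi => by
    have : e i = 0 := by simpa using hi
    simp only [A, this, pow_zero]
    rw [Ideal.span_singleton_one]
    exact Ideal.Quotient.subsingleton_iff.2 rfl)
  have key : ∀ i : {i // e i ≠ 0}, ∃ x : Fin k × Fin N, Associated (π i) (c.p x.1) ∧
      e i = x.2.1 + 1 := by
    rintro ⟨i, hi⟩
    have hz : ∀ j, π i ^ j • (Ideal.Quotient.mk (Ideal.span {π i ^ e i}) 1) = 0 ↔ e i ≤ j := by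
      intro j
      rw [mk_smul_eq_zero, mul_one, pow_dvd_pow_iff (hπ i).ne_zero (hπ i).not_isUnit]
    obtain ⟨x, hx⟩ := h1A i (π i) (hπ i) (π i ^ (e i - 1) • Ideal.Quotient.mk _ 1)
      (by rw [Ne, hz]; omega) (by
        rw [smul_smul, ← pow_succ', hz]; omega)
    have hz' : ∀ j, c.p x ^ j • (Ideal.Quotient.mk (Ideal.span {π i ^ e i}) 1) = 0 ↔ e i ≤ j := by
      intro j
      rw [← hz j, mk_smul_eq_zero, mk_smul_eq_zero, mul_one, mul_one]
      exact (hx.pow_pow).dvd_iff_dvd_right.symm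
    have hle : e i ≤ N := by
      by_contra hlt
      have := h2A i x (c.p x ^ (e i - 1 - N) • Ideal.Quotient.mk _ 1) (by
        rw [smul_smul, ← pow_add, hz']; omega)
      rw [smul_smul, ← pow_add, hz'] at this
      omega
    exact ⟨(x, ⟨e i - 1, by omega⟩), hx, by simp only; omega⟩
  choose f hf hf' using key
  obtain ⟨m, ⟨E3⟩⟩ := c.regroup f
  have E4 : (∀ i : {i // e i ≠ 0}, A i) ≃ₗ[c.K.F[X]] (∀ i, c.Cyc (f i)) :=
    LinearEquiv.piCongrRight fun i => Submodule.quotEquivOfEq _ _ (by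
      rw [hf' i]
      exact Ideal.span_singleton_eq_span_singleton.2 (hf i).pow_pow)
  exact ⟨m, ⟨(E1.trans (E2.trans (E4.trans E3))).symm⟩⟩

end Ctx

noncomputable def theSys (k : ℕ) (d : Fin k → ℕ) (N : ℕ) (hd : ∀ i, 0 < d i) {Ω : Type*}
    (c : Ω → Ctx k d) : Sys Ω (Fin k × Fin N → ℕ) where
  q ω := (c ω).K.q
  q2 ω := (c ω).q2
  R ω := (c ω).K.F[X]
  M ω m := (c ω).Mdl m
  size m := ∑ x, m x * (d x.1 * (x.2.1 + 1))
  card ω m := (c ω).card_mdl m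
  ffin n := by
    refine (Set.finite_Iic (fun _ : Fin k × Fin N => n)).subset ?_
    intro m hm x
    have h1 := Finset.single_le_sum (f := fun x => m x * (d x.1 * (x.2.1 + 1)))
      (fun _ _ => Nat.zero_le _) (Finset.mem_univ x)
    have h2 : m x ≤ m x * (d x.1 * (x.2.1 + 1)) :=
      Nat.le_mul_of_pos_right _ (Nat.mul_pos (hd _) (Nat.succ_pos _))
    exact h2.trans (h1.trans hm)
  sub ω m W := (c ω).classify W
    ((c ω).H1_of_inj W.subtype W.injective_subtype ((c ω).H1_mdl m))
    ((c ω).H2_of_inj W.subtype W.injective_subtype ((c ω).H2_mdl m))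
  uniq ω m m' := (c ω).uniq m m'
  hom m m' := (PC.qpow (∑ x, m x * kapS d x.1 (x.2.1 + 1) m')).congr fun ω => by
    rw [(c ω).hom_mdl m m']; push_cast; rfl

lemma list_lift {α β : Type*} [DecidableEq α] (f : α → β) (L : List β) : ∀ t : Multiset α, t.map f = (L : Multiset β) →
    ∃ l : List α, (l : Multiset α) = t ∧ l.map f = L := by
  classical
  induction L with
  | nil => intro t ht; exact ⟨[], (Multiset.map_eq_zero (f := f).1 ht).symm, rfl⟩
  | cons b L ih =>
    intro t ht
    rw [← Multiset.cons_coe] at ht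
    obtain ⟨a, ha, hab, h⟩ := (Multiset.map_eq_cons f t L b).2 ht
    obtain ⟨l, hl, hl'⟩ := ih _ h
    refine ⟨a :: l, ?_, by simp [hab, hl']⟩
    rw [← Multiset.cons_coe, hl, Multiset.cons_erase ha]

section
open Classical in
/-- flags of the F[X]-module are invariant flags -/
lemma Fl_eq_RFl {F V : Type} [Field F] [Fintype F] [AddCommGroup V] [Module F V]
    [FiniteDimensional F V] (T : V →ₗ[F] V) (S : Finset ℕ) :
    (Fl T S id).ncard = (RFl F[X] (AEval' T) (Fintype.card F) S).ncard := by
  have hq : 1 < Fintype.card F := Fintype.one_lt_card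
  let ex : (W : Submodule F V) → (W.map T ≤ W) → Submodule F[X] (AEval' T) := fun W hW =>
    AEval.mapSubmodule F V T ⟨W, by
      show W ≤ W.comap T
      exact Submodule.map_le_iff_le_comap.1 hW⟩
  let bk : Submodule F[X] (AEval' T) → Submodule F V := fun U =>
    ((AEval.mapSubmodule F V T).symm U).1
  have hbk : ∀ U, (bk U).map T ≤ bk U := fun U =>
    Submodule.map_le_iff_le_comap.2 ((AEval.mapSubmodule F V T).symm U).2
  have hbe : ∀ W hW, bk (ex W hW) = W := fun W hW => by
    simp only [bk, ex, OrderIso.symm_apply_apply]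
  have heb : ∀ U, ex (bk U) (hbk U) = U := fun U => by
    simp only [bk, ex, Subtype.coe_eta, OrderIso.apply_symm_apply]
  have hcard : ∀ U : Submodule F[X] (AEval' T), Nat.card U = Fintype.card F ^ finrank F (bk U) := by
    intro U
    rw [← Nat.card_eq_fintype_card, ← Module.natCard_eq_pow_finrank (K := F)]
    refine Nat.card_congr ((AEval'.of T).toEquiv.subtypeEquiv fun v => ?_).symm
    show v ∈ bk U ↔ _
    simp only [bk, AEval.mem_mapSubmodule_symm_apply]
    rfl
  have hmono : ∀ U U', bk U ≤ bk U' ↔ U ≤ U' := fun U U' =>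
    (AEval.mapSubmodule F V T).symm.le_iff_le (x := U) (y := U')
  have hbot : bk ⊥ = ⊥ := by
    simp only [bk, OrderIso.map_bot]; rfl
  have hinj : Injective bk := fun U U' h => le_antisymm ((hmono _ _).1 h.le) ((hmono _ _).1 h.ge)
  symm
  refine Set.ncard_congr (fun X _ s => bk (X s)) ?_ ?_ ?_
  · rintro X ⟨h1, h2, h3⟩
    refine ⟨fun s hs => by simp only [h1 s hs, hbot], fun s hs => ?_, fun s hs t ht hst =>
      (hmono _ _).2 (h3 s hs t ht hst), fun s hs => hbk _⟩
    have := h2 s hs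
    rw [hcard] at this
    exact Nat.pow_right_injective hq this
  · intro X Y _ _ h
    funext s
    exact hinj (congrFun h s)
  · rintro X ⟨h1, h2, h3, h4⟩
    have h4' : ∀ s, (X s).map T ≤ X s := fun s => by
      by_cases hs : s ∈ S
      · exact h4 s hs
      · rw [h1 s hs]; simp
    refine ⟨fun s => ex (X s) (h4' s), ⟨fun s hs => ?_, fun s hs => ?_, fun s hs t ht hst => ?_⟩, ?_⟩
    · apply hinj; rw [hbe _ (h4' s), hbot, h1 s hs]
    · rw [hcard, hbe _ (h4' s), h2 s hs]
    · rw [← hmono, hbe _ (h4' s), hbe _ (h4' t)]; exact h3 s hs t ht hst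
    · funext s; exact hbe _ (h4' s)
end

end part6

section part7

open Polynomial Module Function

lemma sum_min_count (N : ℕ) (j : ℕ) (l : Multiset ℕ) : (∀ a ∈ l, 0 < a ∧ a ≤ N) →
    (l.map (fun a => min a j)).sum = ∑ a : Fin N, l.count (a.1 + 1) * min j (a.1 + 1) := by
  induction l using Multiset.induction_on with
  | empty => intro _; simp
  | cons b l ih =>
    intro h
    have hb := h b (by simp)
    rw [Multiset.map_cons, Multiset.sum_cons, ih fun a ha => h a (by simp [ha])]
    simp only [Multiset.count_cons, add_mul, Finset.sum_add_distrib]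
    rw [add_comm]
    congr 1
    rw [Finset.sum_eq_single (⟨b - 1, by omega⟩ : Fin N)]
    · simp only
      rw [if_pos (by omega), show b - 1 + 1 = b by omega, one_mul, min_comm]
    · intro a _ hab
      rw [if_neg, zero_mul]
      intro e
      apply hab
      apply Fin.ext
      simp only
      omega
    · simp

noncomputable def tN (τ : Multiset (ℕ × Multiset ℕ)) : ℕ := (τ.map fun x => x.2.sum).sum

lemma le_tN (τ : Multiset (ℕ × Multiset ℕ)) (x) (hx : x ∈ τ) (a) (ha : a ∈ x.2) : a ≤ tN τ :=
  (Multiset.single_le_sum (fun _ _ => Nat.zero_le _) a ha).trans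
    (Multiset.single_le_sum (s := τ.map fun x => x.2.sum) (fun _ _ => Nat.zero_le _) _
      (Multiset.mem_map_of_mem (fun x : ℕ × Multiset ℕ => x.2.sum) hx))

noncomputable def td (τ : Multiset (ℕ × Multiset ℕ)) (i : Fin τ.toList.length) : ℕ := (τ.toList.get i).1

noncomputable def tm (τ : Multiset (ℕ × Multiset ℕ)) (x : Fin τ.toList.length × Fin (tN τ)) : ℕ :=
  (τ.toList.get x.1).2.count (x.2.1 + 1)

lemma type_model (τ : Multiset (ℕ × Multiset ℕ)) (o : Op) (h : HasType τ o.T) :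
    ∃ (p : Fin τ.toList.length → o.K.F[X]) (h1 : ∀ i, (p i).Monic) (h2 : ∀ i, Irreducible (p i))
      (h3 : Injective p) (h4 : ∀ i, (p i).natDegree = td τ i),
      Nonempty ((Ctx.mk o.K p h1 h2 h3 h4).Mdl (tm τ) ≃ₗ[o.K.F[X]] AEval' o.T) := by
  classical
  obtain ⟨s, lam, hs, hpos, hτ, hker, hout⟩ := h
  obtain ⟨l, hl, hlL⟩ := list_lift (fun p => (p.natDegree, lam p)) τ.toList s.val (by
    rw [Multiset.coe_toList, hτ])
  have hnd : l.Nodup := by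
    rw [← Multiset.coe_nodup, hl]; exact s.nodup
  have hmem : ∀ p, p ∈ l ↔ p ∈ s := fun p => by
    rw [← Multiset.mem_coe, hl]; rfl
  have hlen : τ.toList.length = l.length := by rw [← hlL, List.length_map]
  let p : Fin τ.toList.length → o.K.F[X] := fun i => l.get (i.cast hlen)
  have hps : ∀ i, p i ∈ s := fun i => (hmem _).1 (List.get_mem _ _)
  have hget : ∀ i, τ.toList.get i = ((p i).natDegree, lam (p i)) := by
    intro i
    simp only [p, List.get_eq_getElem]
    rw [List.getElem_of_eq hlL.symm, List.getElem_map]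
    rfl
  have hsurj : ∀ f ∈ s, ∃ i, p i = f := by
    intro f hf
    obtain ⟨i, hi⟩ := List.get_of_mem ((hmem f).2 hf)
    exact ⟨i.cast hlen.symm, by simpa [p] using hi⟩
  have hinj : Injective p := by
    intro i j hij
    have := (List.nodup_iff_injective_get.1 hnd) hij
    simpa using this
  have hdeg : ∀ i, (p i).natDegree = td τ i := fun i => by rw [td, hget]
  refine ⟨p, fun i => (hs _ (hps i)).1, fun i => (hs _ (hps i)).2, hinj, hdeg, ?_⟩
  set c : Ctx τ.toList.length (td τ) := Ctx.mk o.K p (fun i => (hs _ (hps i)).1)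
    (fun i => (hs _ (hps i)).2) hinj hdeg with hc
  have hmz : ∀ (f : o.K.F[X]) (z : AEval' o.T), f • z = 0 ↔
      (AEval'.of o.T).symm z ∈ LinearMap.ker (aeval o.T f) := by
    intro f z
    rw [LinearMap.mem_ker, ← LinearEquiv.map_eq_zero_iff (AEval'.of o.T).symm]
    erw [AEval.of_symm_smul]
  have hpart : ∀ i, ∀ a ∈ lam (p i), 0 < a ∧ a ≤ tN τ := by
    intro i a ha
    refine ⟨hpos _ (hps i) a ha, le_tN τ (τ.toList.get i) ?_ a (by rw [hget]; exact ha)⟩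
    rw [← Multiset.mem_toList]; exact List.get_mem _ _
  have h1 : c.H1 (AEval' o.T) := by
    intro π hπ z hz hz'
    have hlc : π.leadingCoeff ≠ 0 := leadingCoeff_ne_zero.2 hπ.ne_zero
    have hu : IsUnit (C π.leadingCoeff⁻¹) := isUnit_C.2 (isUnit_iff_ne_zero.2 (inv_ne_zero hlc))
    have hass : Associated π (π * C π.leadingCoeff⁻¹) := (associated_mul_unit_right _ _ hu)
    have hmon : (π * C π.leadingCoeff⁻¹).Monic := monic_mul_leadingCoeff_inv hπ.ne_zero
    by_cases hin : π * C π.leadingCoeff⁻¹ ∈ s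
    · obtain ⟨i, hi⟩ := hsurj _ hin
      refine ⟨i, ?_⟩
      show Associated π (p i)
      rw [hi]; exact hass
    · exfalso
      have hk := hout _ hmon (hass.irreducible hπ) hin
      have : (π * C π.leadingCoeff⁻¹) • z = 0 := by
        rw [mul_comm, mul_smul, hz', smul_zero]
      rw [hmz, hk] at this
      exact hz (by simpa using this)
  have h2 : c.H2 (tN τ) (AEval' o.T) := by
    intro i z hz
    change p i ^ (tN τ + 1) • z = 0 at hz
    show p i ^ (tN τ) • z = 0
    rw [hmz] at hz ⊢
    have hle : LinearMap.ker (aeval o.T (p i ^ tN τ)) ≤ LinearMap.ker (aeval o.T (p i ^ (tN τ + 1))) := by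
      intro v hv
      rw [LinearMap.mem_ker] at hv ⊢
      rw [pow_succ', map_mul, Module.End.mul_apply, hv, map_zero]
    rw [Submodule.eq_of_le_of_finrank_eq hle]
    · exact hz
    · rw [hker _ (hps i), hker _ (hps i)]
      congr 2
      refine Multiset.map_congr rfl fun a ha => ?_
      have := (hpart i a ha).2
      rw [min_eq_left this, min_eq_left (by omega)]
  haveI : Finite (AEval' o.T) := Finite.of_equiv o.V (AEval'.of o.T).toEquiv
  obtain ⟨m, ⟨e⟩⟩ := c.classify (N := tN τ) (AEval' o.T) h1 h2
  have hm : m = tm τ := by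
    refine kapS_inj (td τ) (fun i => by rw [← hdeg]; exact (c.irr i).natDegree_pos) _ _ fun i j => ?_
    apply Nat.pow_right_injective c.q2
    show c.K.q ^ _ = c.K.q ^ _
    rw [← c.ker_mdl, c.ker_congr e]
    have e1 : Nat.card {z : AEval' o.T // c.p i ^ j • z = 0} =
        Nat.card (LinearMap.ker (aeval o.T (p i ^ j))) :=
      Nat.card_congr ((AEval'.of o.T).symm.toEquiv.subtypeEquiv fun z => hmz _ z)
    rw [e1, Module.natCard_eq_pow_finrank (K := o.K.F), hker _ (hps i), Nat.card_eq_fintype_card]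
    congr 1
    rw [kapS_eq, hdeg, sum_min_count (tN τ) j _ (hpart i)]
    congr 1
    refine Finset.sum_congr rfl fun a _ => ?_
    rw [tm, hget]
  subst hm
  exact ⟨e⟩

def Ty (τ : Multiset (ℕ × Multiset ℕ)) : Type 1 := {o : Op // HasType τ o.T}

noncomputable abbrev ctxOf {τ : Multiset (ℕ × Multiset ℕ)} (ω : Ty τ) : Ctx τ.toList.length (td τ) :=
  Ctx.mk ω.1.K (type_model τ ω.1 ω.2).choose (type_model τ ω.1 ω.2).choose_spec.choose
    (type_model τ ω.1 ω.2).choose_spec.choose_spec.choose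
    (type_model τ ω.1 ω.2).choose_spec.choose_spec.choose_spec.choose
    (type_model τ ω.1 ω.2).choose_spec.choose_spec.choose_spec.choose_spec.choose

lemma ctxOf_spec {τ : Multiset (ℕ × Multiset ℕ)} (ω : Ty τ) :
    Nonempty ((ctxOf ω).Mdl (tm τ) ≃ₗ[ω.1.K.F[X]] AEval' ω.1.T) :=
  (type_model τ ω.1 ω.2).choose_spec.choose_spec.choose_spec.choose_spec.choose_spec

theorem base_flags (τ : Multiset (ℕ × Multiset ℕ)) (S : Finset ℕ) :
    PC (fun ω : Ty τ => ω.1.K.q) (fun ω : Ty τ => ((Fl ω.1.T S id).ncard : ℚ)) := by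
  rcases isEmpty_or_nonempty (Ty τ) with hE | ⟨⟨ω0⟩⟩
  · exact ⟨0, fun ω => hE.elim ω⟩
  · have hd : ∀ i, 0 < td τ i := fun i => by
      rw [← (ctxOf ω0).deg]; exact ((ctxOf ω0).irr i).natDegree_pos
    refine ((theSys _ (td τ) (tN τ) hd (fun ω : Ty τ => ctxOf ω)).PC_flags S (tm τ)).congr fun ω => ?_
    rw [Fl_eq_RFl]
    obtain ⟨e⟩ := ctxOf_spec ω
    have := RFl_congr e (Fintype.card ω.1.K.F) S
    rw [← this]
    rfl

theorem type_dim (τ : Multiset (ℕ × Multiset ℕ)) : ∃ n, ∀ ω : Ty τ, finrank ω.1.K.F ω.1.V = n := by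
  refine ⟨∑ x, tm τ x * (td τ x.1 * (x.2.1 + 1)), fun ω => ?_⟩
  obtain ⟨e⟩ := ctxOf_spec ω
  have h1 := (ctxOf ω).card_mdl (tm τ)
  rw [Nat.card_congr e.toEquiv, ← Nat.card_congr (AEval'.of ω.1.T).toEquiv,
    Module.natCard_eq_pow_finrank (K := ω.1.K.F), Nat.card_eq_fintype_card] at h1
  exact Nat.pow_right_injective (ctxOf ω).q2 h1

end part7

section part8

open Polynomial Module Function

section prof
variable {F V : Type*} [Field F] [AddCommGroup V] [Module F V] {r : ℕ}

def nx (W : Fin r → Submodule F V) (i : Fin r) : Submodule F V :=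
  if h : i.1 + 1 < r then W ⟨i.1 + 1, h⟩ else ⊥

def nxN (A : Fin r → ℕ) (i : Fin r) : ℕ :=
  if h : i.1 + 1 < r then A ⟨i.1 + 1, h⟩ else 0

lemma finrank_nx (W : Fin r → Submodule F V) (A : Fin r → ℕ) (h : ∀ i, finrank F (W i) = A i)
    (i : Fin r) : finrank F (nx W i) = nxN A i := by
  by_cases hi : i.1 + 1 < r
  · have e : nx W i = W ⟨i.1 + 1, hi⟩ := dif_pos hi
    have e' : nxN A i = A ⟨i.1 + 1, hi⟩ := dif_pos hi
    rw [e, e']; exact h _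
  · have e : nx W i = ⊥ := dif_neg hi
    have e' : nxN A i = 0 := dif_neg hi
    rw [e, e']; simp

def Prs (T : V →ₗ[F] V) (A c : Fin r → ℕ) :
    Set ((Fin r → Submodule F V) × (Fin r → Submodule F V)) :=
  {P | (∀ i, finrank F (P.1 i) = A i) ∧ ∀ i, nx P.1 i ≤ P.2 i ∧
    P.2 i ≤ P.1 i ⊓ (P.1 i).comap T ∧ finrank F (P.2 i) = c i}

def pS (n : ℕ) (A c : Fin r → ℕ) : Finset ℕ :=
  {0, n} ∪ (Finset.univ.image A ∪ Finset.univ.image c)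

def pSet (n : ℕ) (A c : Fin r → ℕ) (s : ℕ) : Finset ℕ :=
  insert n ((Finset.univ.filter (fun i => s ≤ c i)).image A)

lemma pSet_ne (n : ℕ) (A c : Fin r → ℕ) (s : ℕ) : (pSet n A c s).Nonempty := ⟨n, by simp [pSet]⟩

def pH (n : ℕ) (A c : Fin r → ℕ) (s : ℕ) : ℕ :=
  if s = 0 then 0 else (pSet n A c s).min' (pSet_ne n A c s)

lemma mem_pS (n : ℕ) (A c : Fin r → ℕ) (s : ℕ) :
    s ∈ pS n A c ↔ s = 0 ∨ s = n ∨ (∃ i, A i = s) ∨ ∃ i, c i = s := by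
  simp [pS]

lemma pH_cases (n : ℕ) (A c : Fin r → ℕ) (s : ℕ) :
    (s = 0 ∧ pH n A c s = 0) ∨ (pH n A c s = n) ∨ ∃ i, s ≤ c i ∧ pH n A c s = A i := by
  unfold pH
  split_ifs with h
  · exact Or.inl ⟨h, rfl⟩
  · right
    have := Finset.min'_mem (pSet n A c s) (pSet_ne n A c s)
    simp only [pSet, Finset.mem_insert, Finset.mem_image, Finset.mem_filter, Finset.mem_univ,
      true_and] at this
    rcases this with h | ⟨i, h1, h2⟩
    · exact Or.inl h
    · exact Or.inr ⟨i, h1, h2.symm⟩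

lemma pH_le (n : ℕ) (A c : Fin r → ℕ) (s : ℕ) (i : Fin r) (h : s ≤ c i) : pH n A c s ≤ A i := by
  unfold pH
  split_ifs with h0
  · omega
  · apply Finset.min'_le
    simp only [pSet, Finset.mem_insert, Finset.mem_image, Finset.mem_filter, Finset.mem_univ,
      true_and]
    exact Or.inr ⟨i, h, rfl⟩

lemma pH_le_n (n : ℕ) (A c : Fin r → ℕ) (s : ℕ) : pH n A c s ≤ n := by
  unfold pH
  split_ifs with h0
  · omega
  · apply Finset.min'_le
    simp [pSet]

lemma pValid (n : ℕ) (A c : Fin r → ℕ) (hcA : ∀ i, c i ≤ A i) (hA : ∀ i, A i ≤ n) :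
    Valid n (pS n A c) (pH n A c) where
  zero := by simp [mem_pS]
  top := by simp [mem_pS]
  le s hs := by
    rw [mem_pS] at hs
    rcases hs with h | h | ⟨i, h⟩ | ⟨i, h⟩
    · omega
    · omega
    · have := hA i; omega
    · have := hA i; have := hcA i; omega
  h0 := by simp [pH]
  maps s hs := by
    rw [mem_pS]
    rcases pH_cases n A c s with h | h | ⟨i, h⟩
    · exact Or.inl h.2
    · exact Or.inr (Or.inl h)
    · exact Or.inr (Or.inr (Or.inl ⟨i, h.2.symm⟩))
  ge s hs := by
    have hsn : s ≤ n := by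
      rw [mem_pS] at hs
      rcases hs with h | h | ⟨i, h⟩ | ⟨i, h⟩
      · omega
      · omega
      · have := hA i; omega
      · have := hA i; have := hcA i; omega
    rcases pH_cases n A c s with h | h | ⟨i, h⟩
    · omega
    · omega
    · have := hcA i; omega
  mono s hs t ht hst := by
    rcases pH_cases n A c t with h | h | ⟨i, h⟩
    · have h1 : s = 0 := by omega
      simp [h1, pH]
    · rw [h]; exact pH_le_n _ _ _ _
    · rw [h.2]; exact pH_le _ _ _ _ _ (hst.trans h.1)

variable [FiniteDimensional F V]

/-- the combined family -/
def fam (P : (Fin r → Submodule F V) × (Fin r → Submodule F V)) : Fin r ⊕ Fin r ⊕ Bool → Submodule F V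
  | .inl i => P.1 i
  | .inr (.inl i) => P.2 i
  | .inr (.inr false) => ⊥
  | .inr (.inr true) => ⊤

def famD (n : ℕ) (A c : Fin r → ℕ) : Fin r ⊕ Fin r ⊕ Bool → ℕ
  | .inl i => A i
  | .inr (.inl i) => c i
  | .inr (.inr false) => 0
  | .inr (.inr true) => n

lemma Prs_lt (T : V →ₗ[F] V) (A c : Fin r → ℕ)
    (P : (Fin r → Submodule F V) × (Fin r → Submodule F V)) (hP : P ∈ Prs T A c) (i j : Fin r)
    (hij : i < j) : P.1 j ≤ P.2 i := by
  have : ∀ (t : ℕ) (h : i.1 + 1 + t < r), P.1 ⟨i.1 + 1 + t, h⟩ ≤ P.2 i := by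
    intro t
    induction t with
    | zero =>
      intro h
      have := (hP.2 i).1
      unfold nx at this
      rw [dif_pos h] at this
      exact this
    | succ t ih =>
      intro h
      have h' : i.1 + 1 + t < r := by omega
      have h1 := (hP.2 ⟨i.1 + 1 + t, h'⟩).1
      unfold nx at h1
      rw [dif_pos (show i.1 + 1 + t + 1 < r by omega)] at h1
      exact (h1.trans ((hP.2 ⟨i.1 + 1 + t, h'⟩).2.1.trans inf_le_left)).trans (ih h')
  have h2 := this (j.1 - (i.1 + 1)) (by have := j.2; have : i.1 < j.1 := hij; omega)
  have e : (⟨i.1 + 1 + (j.1 - (i.1 + 1)), by have := j.2; have : i.1 < j.1 := hij; omega⟩ : Fin r) = j :=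
    Fin.ext (by have : i.1 < j.1 := hij; simp only; omega)
  rwa [e] at h2

lemma Prs_UW (T : V →ₗ[F] V) (A c : Fin r → ℕ)
    (P : (Fin r → Submodule F V) × (Fin r → Submodule F V)) (hP : P ∈ Prs T A c) (i : Fin r) :
    P.2 i ≤ P.1 i := (hP.2 i).2.1.trans inf_le_left

lemma fam_cmp (T : V →ₗ[F] V) (A c : Fin r → ℕ)
    (P : (Fin r → Submodule F V) × (Fin r → Submodule F V)) (hP : P ∈ Prs T A c)
    (j j' : Fin r ⊕ Fin r ⊕ Bool) : fam P j ≤ fam P j' ∨ fam P j' ≤ fam P j := by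
  have lt := Prs_lt T A c P hP
  have uw := Prs_UW T A c P hP
  rcases j with i | i | (_ | _) <;> rcases j' with i' | i' | (_ | _) <;>
    simp only [fam, bot_le, le_top, true_or, or_true]
  · rcases lt_trichotomy i i' with h | h | h
    · exact Or.inr ((lt i i' h).trans (uw i))
    · subst h; exact Or.inl le_rfl
    · exact Or.inl ((lt i' i h).trans (uw i'))
  · rcases lt_trichotomy i i' with h | h | h
    · exact Or.inr ((uw i').trans ((lt i i' h).trans (uw i)))
    · subst h; exact Or.inr (uw i)
    · exact Or.inl (lt i' i h)
  · rcases lt_trichotomy i i' with h | h | h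
    · exact Or.inr (lt i i' h)
    · subst h; exact Or.inl (uw i)
    · exact Or.inl ((uw i).trans ((lt i' i h).trans (uw i')))
  · rcases lt_trichotomy i i' with h | h | h
    · exact Or.inr ((uw i').trans (lt i i' h))
    · subst h; exact Or.inl le_rfl
    · exact Or.inl ((uw i).trans (lt i' i h))

lemma Fl_Prs (T : V →ₗ[F] V) (n : ℕ) (hn : finrank F V = n) (A c : Fin r → ℕ)
    (hAc : ∀ i, nxN A i ≤ c i) (hcA : ∀ i, c i ≤ A i) (hA : ∀ i, A i ≤ n) :
    (Fl T (pS n A c) (pH n A c)).ncard = (Prs T A c).ncard := by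
  classical
  have mA : ∀ i, A i ∈ pS n A c := fun i => (mem_pS _ _ _ _).2 (Or.inr (Or.inr (Or.inl ⟨i, rfl⟩)))
  have mc : ∀ i, c i ∈ pS n A c := fun i => (mem_pS _ _ _ _).2 (Or.inr (Or.inr (Or.inr ⟨i, rfl⟩)))
  have m0 : 0 ∈ pS n A c := by simp [mem_pS]
  have mn : n ∈ pS n A c := by simp [mem_pS]
  have hv := pValid n A c hcA hA
  refine Set.ncard_congr (fun X _ => (fun i => X (A i), fun i => X (c i))) ?_ ?_ ?_
  · rintro X ⟨h1, h2, h3, h4⟩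
    refine ⟨fun i => h2 _ (mA i), fun i => ⟨?_, ?_, h2 _ (mc i)⟩⟩
    · have := hAc i
      unfold nxN at this
      unfold nx
      split_ifs at this ⊢ with h
      · exact h3 _ (mA _) _ (mc _) this
      · exact bot_le
    · refine le_inf (h3 _ (mc _) _ (mA _) (hcA i)) ?_
      rw [← Submodule.map_le_iff_le_comap]
      exact (h4 _ (mc i)).trans (h3 _ (hv.maps _ (mc i)) _ (mA i) (pH_le n A c _ i le_rfl))
  · rintro X Y ⟨h1, h2, h3, h4⟩ ⟨h1', h2', h3', h4'⟩ h
    rw [Prod.mk.injEq] at h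
    funext s
    by_cases hs : s ∈ pS n A c
    · have hs' := hs
      rw [mem_pS] at hs
      rcases hs with e | e | ⟨i, e⟩ | ⟨i, e⟩
      · subst e
        rw [Submodule.finrank_eq_zero.1 (h2 0 m0), Submodule.finrank_eq_zero.1 (h2' 0 m0)]
      · rw [Submodule.eq_top_of_finrank_eq ((h2 s hs').trans (e.trans hn.symm)),
          Submodule.eq_top_of_finrank_eq ((h2' s hs').trans (e.trans hn.symm))]
      · rw [← e]; exact congrFun h.1 i
      · rw [← e]; exact congrFun h.2 i
    · rw [h1 s hs, h1' s hs]
  · rintro P hP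
    let G := fam P
    let D := famD n A c
    have hGD : ∀ j, finrank F (G j) = D j := by
      rintro (i | i | (_ | _))
      · exact hP.1 i
      · exact (hP.2 i).2.2
      · exact finrank_bot F V
      · exact (finrank_top F V).trans hn
    have hle : ∀ j j', D j ≤ D j' → G j ≤ G j' := by
      intro j j' h
      rcases fam_cmp T A c P hP j j' with h' | h'
      · exact h'
      · have := Submodule.eq_of_le_of_finrank_le h' (by
          show finrank F (G j) ≤ finrank F (G j')
          rw [hGD, hGD]; exact h)
        exact this.ge
    have hmem : ∀ s, s ∈ pS n A c ↔ ∃ j, D j = s := by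
      intro s
      rw [mem_pS]
      constructor
      · rintro (h | h | ⟨i, h⟩ | ⟨i, h⟩)
        · exact ⟨.inr (.inr false), h.symm⟩
        · exact ⟨.inr (.inr true), h.symm⟩
        · exact ⟨.inl i, h⟩
        · exact ⟨.inr (.inl i), h⟩
      · rintro ⟨(i | i | (_ | _)), h⟩
        · exact Or.inr (Or.inr (Or.inl ⟨i, h⟩))
        · exact Or.inr (Or.inr (Or.inr ⟨i, h⟩))
        · exact Or.inl h.symm
        · exact Or.inr (Or.inl h.symm)
    let X : ℕ → Submodule F V := fun s => if h : ∃ j, D j = s then G h.choose else ⊥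
    have hX : ∀ j, X (D j) = G j := by
      intro j
      have h : ∃ j', D j' = D j := ⟨j, rfl⟩
      simp only [X, dif_pos h]
      exact le_antisymm (hle _ _ h.choose_spec.le) (hle _ _ h.choose_spec.ge)
    refine ⟨X, ⟨?_, ?_, ?_, ?_⟩, ?_⟩
    · intro s hs
      rw [hmem] at hs
      simp only [X, dif_neg hs]
    · intro s hs
      obtain ⟨j, rfl⟩ := (hmem s).1 hs
      rw [hX, hGD]
    · intro s hs t ht hst
      obtain ⟨j, rfl⟩ := (hmem s).1 hs
      obtain ⟨j', rfl⟩ := (hmem t).1 ht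
      rw [hX, hX]; exact hle _ _ hst
    · intro s hs
      obtain ⟨j, rfl⟩ := (hmem s).1 hs
      rw [hX]
      rcases pH_cases n A c (D j) with h | h | ⟨i, h⟩
      · have : G j = ⊥ := Submodule.finrank_eq_zero.1 ((hGD j).trans h.1)
        rw [this]; simp
      · rw [h, show X n = ⊤ from hX (.inr (.inr true))]
        exact le_top
      · rw [h.2, show X (A i) = P.1 i from hX (.inl i)]
        have h5 : G j ≤ P.2 i := hle j (.inr (.inl i)) h.1
        refine (Submodule.map_mono h5).trans ?_
        rw [Submodule.map_le_iff_le_comap]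
        exact (hP.2 i).2.1.trans inf_le_right
    · exact Prod.ext (funext fun i => hX (.inl i)) (funext fun i => hX (.inr (.inl i)))

end prof

section prof2
variable {F V : Type*} [Field F] [Fintype F] [AddCommGroup V] [Module F V] {r : ℕ}
  [FiniteDimensional F V] [Finite V]

def Zs (T : V →ₗ[F] V) (A : Fin r → ℕ) : Set (Fin r → Submodule F V) :=
  {W | (∀ i, finrank F (W i) = A i) ∧ ∀ i, nx W i ≤ W i ⊓ (W i).comap T}

lemma Zs_finite (T : V →ₗ[F] V) (A : Fin r → ℕ) : (Zs T A).Finite := by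
  haveI := finite_submodule (R := F) (B := V)
  exact Set.toFinite _

lemma ncard_pi {r : ℕ} {α : Type*} [Finite α] (s : Fin r → Set α) :
    {U : Fin r → α | ∀ i, U i ∈ s i}.ncard = ∏ i, (s i).ncard := by
  rw [← Nat.card_coe_set_eq]
  refine (Nat.card_congr (Equiv.subtypePiEquivPi (p := fun i x => x ∈ s i))).trans ?_
  rw [Nat.card_pi]
  exact Finset.prod_congr rfl fun i _ => Nat.card_coe_set_eq _

lemma Prs_card (T : V →ₗ[F] V) (A k : Fin r → ℕ) :
    (Prs T A (fun i => nxN A i + k i)).ncard = ∑ W ∈ (Zs_finite T A).toFinset,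
      ∏ i, gbn F (finrank F ↥(W i ⊓ (W i).comap T) - nxN A i) (k i) := by
  classical
  haveI := finite_submodule (R := F) (B := V)
  rw [ncard_fiber _ (Set.toFinite _) (Zs_finite T A).toFinset Prod.fst (fun P hP => by
    rw [Set.Finite.mem_toFinset]
    exact ⟨hP.1, fun i => (hP.2 i).1.trans (hP.2 i).2.1⟩)]
  refine Finset.sum_congr rfl fun W hW => ?_
  rw [Set.Finite.mem_toFinset] at hW
  have h1 : ∀ i, gbn F (finrank F ↥(W i ⊓ (W i).comap T) - nxN A i) (k i) =
      {U : Submodule F V | nx W i ≤ U ∧ U ≤ W i ⊓ (W i).comap T ∧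
        finrank F U = nxN A i + k i}.ncard := by
    intro i
    rw [card_interval _ _ (hW.2 i) _ (by rw [finrank_nx W A hW.1]; omega), finrank_nx W A hW.1]
    congr 1
    omega
  simp only [h1]
  rw [← ncard_pi]
  refine Set.ncard_congr (fun P _ => P.2) ?_ ?_ ?_
  · rintro P ⟨hP, rfl⟩ i
    exact hP.2 i
  · rintro P Q ⟨_, h⟩ ⟨_, h'⟩ e
    exact Prod.ext (h.trans h'.symm) e
  · intro U hU
    exact ⟨(W, U), ⟨⟨hW.1, hU⟩, rfl⟩, rfl⟩

lemma tuple_eq (T : V →ₗ[F] V) (a : Fin r → ℕ × ℕ) : tupleSet T r a =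
    {W | W ∈ Zs T (fun i => (a i).1) ∧ ∀ i, finrank F ↥(W i ⊓ (W i).comap T) = (a i).2} := by
  have key : ∀ (W : Fin r → Submodule F V) i, nx W i ≤ W i ⊓ (W i).comap T ↔
      ∀ h : i.1 + 1 < r, W ⟨i.1 + 1, h⟩ ⊔ (W ⟨i.1 + 1, h⟩).map T ≤ W i := by
    intro W i
    unfold nx
    split_ifs with h
    · rw [le_inf_iff, ← Submodule.map_le_iff_le_comap, ← sup_le_iff]
      exact ⟨fun h _ => h, fun h' => h' h⟩
    · exact ⟨fun _ h' => absurd h' h, fun _ => bot_le⟩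
  ext W
  simp only [tupleSet, Zs, pairSet, Set.mem_ofPred_eq, key]
  constructor
  · rintro ⟨h1, h2⟩
    exact ⟨⟨fun i => (h1 i).1, h2⟩, fun i => (h1 i).2⟩
  · rintro ⟨⟨h1, h2⟩, h3⟩
    exact ⟨fun i => ⟨h1 i, h3 i⟩, h2⟩

end prof2

theorem profile {Ω : Type*} (o : Ω → Op) (n : ℕ) (hn : ∀ ω, finrank (o ω).K.F (o ω).V = n)
    (base : ∀ S : Finset ℕ, PC (fun ω => (o ω).K.q) (fun ω => ((Fl (o ω).T S id).ncard : ℚ)))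
    (r : ℕ) (a : Fin r → ℕ × ℕ) :
    PC (fun ω => (o ω).K.q) (fun ω => ((tupleSet (o ω).T r a).ncard : ℚ)) := by
  classical
  by_cases hex : ∀ ω, tupleSet (o ω).T r a = ∅
  · exact (PC.const 0).congr fun ω => by rw [hex ω]; simp
  push Not at hex
  obtain ⟨ω0, W0, hW0⟩ := hex
  set A : Fin r → ℕ := fun i => (a i).1 with hAdef
  rw [tuple_eq] at hW0
  obtain ⟨hZ0, hB0⟩ := hW0
  have hZ1 : ∀ i, finrank (o ω0).K.F (W0 i) = A i := hZ0.1
  have hBA : ∀ i, (a i).2 ≤ A i := fun i => by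
    rw [← hB0 i, ← hZ1 i]; exact Submodule.finrank_mono inf_le_left
  have hNB : ∀ i, nxN A i ≤ (a i).2 := fun i => by
    rw [← hB0 i, ← finrank_nx W0 A hZ0.1 i]; exact Submodule.finrank_mono (hZ0.2 i)
  have hAn : ∀ i, A i ≤ n := fun i => by
    rw [← hZ1 i, ← hn ω0]; exact Submodule.finrank_le _
  have hind := fun i => inSpan_ind (fun ω => (o ω).K) (A i - nxN A i) (A i - (a i).2)
    ((a i).2 - nxN A i) (by have := hBA i; have := hNB i; omega)
  choose cf hcf hcf' using hind
  have hk : ∀ k ∈ Fintype.piFinset (fun i => Finset.range (A i - nxN A i + 1)),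
      PC (fun ω => (o ω).K.q) (fun ω => (∏ i, cf i (k i) ω) *
        ((Prs (o ω).T A (fun i => nxN A i + k i)).ncard : ℚ)) := by
    intro k hk
    rw [Fintype.mem_piFinset] at hk
    have hk' : ∀ i, nxN A i + k i ≤ A i := fun i => by
      have h1 := hk i; have := hBA i; have := hNB i
      rw [Finset.mem_range] at h1; omega
    refine (PC.prod _ (fun i ω => cf i (k i) ω) fun i _ => hcf i (k i)).mul ?_
    refine (hess o n base _ _ _ rfl (pValid n A (fun i => nxN A i + k i) hk' hAn)).congr fun ω => ?_
    rw [Fl_Prs (o ω).T n (hn ω) A _ (fun i => Nat.le_add_right _ _) hk' hAn]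
  refine (PC.sum _ _ hk).congr fun ω => ?_
  simp only [Prs_card]
  push_cast
  simp only [Finset.mul_sum]
  rw [Finset.sum_comm]
  have hprod : ∀ W ∈ (Zs_finite (o ω).T A).toFinset,
      ∑ k ∈ Fintype.piFinset (fun i => Finset.range (A i - nxN A i + 1)), (∏ i, cf i (k i) ω) *
        ∏ i, (gbn (o ω).K.F (finrank (o ω).K.F ↥(W i ⊓ (W i).comap (o ω).T) - nxN A i) (k i) : ℚ) =
      if ∀ i, finrank (o ω).K.F ↥(W i ⊓ (W i).comap (o ω).T) = (a i).2 then 1 else 0 := by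
    intro W hW
    rw [Set.Finite.mem_toFinset] at hW
    simp only [← Finset.prod_mul_distrib]
    rw [← Finset.prod_univ_sum (fun i => Finset.range (A i - nxN A i + 1)) (fun i x => cf i x ω *
      (gbn (o ω).K.F (finrank (o ω).K.F ↥(W i ⊓ (W i).comap (o ω).T) - nxN A i) x : ℚ))]
    have h1 : ∀ i, ∑ x ∈ Finset.range (A i - nxN A i + 1), cf i x ω *
      (gbn (o ω).K.F (finrank (o ω).K.F ↥(W i ⊓ (W i).comap (o ω).T) - nxN A i) x : ℚ) =
        if finrank (o ω).K.F ↥(W i ⊓ (W i).comap (o ω).T) = (a i).2 then 1 else 0 := by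
      intro i
      have e1 := Submodule.finrank_mono (hW.2 i)
      rw [finrank_nx W A hW.1] at e1
      have e2 := Submodule.finrank_mono (inf_le_left : W i ⊓ (W i).comap (o ω).T ≤ W i)
      rw [hW.1 i] at e2
      have e3 := hcf' i ω (finrank (o ω).K.F ↥(W i ⊓ (W i).comap (o ω).T) - nxN A i) (by omega)
      rw [← e3]
      have := hNB i
      exact if_congr (by omega) rfl rfl
    simp only [h1]
    rw [Finset.prod_ite_zero]
    simp
  rw [Finset.sum_congr rfl hprod, Finset.sum_boole, tuple_eq]
  congr 1
  rw [← Set.ncard_coe_finset]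
  congr 1
  ext W
  simp
  exact fun _ => Iff.rfl

end part8

/-- for a fixed similarity class type `τ` and fixed nonnegative integers
`a_{i,j}`, there is a polynomial `P` such that for every finite field `F_q` and every
operator `T` of type `τ` over `F_q`, `|[(a₁,₁,a₁,₂),…,(a_r,₁,a_r,₂)]_T| = P(q)`. -/
theorem tupleSet_ncard_polynomial (τ : Multiset (ℕ × Multiset ℕ))
    (r : ℕ) (a : Fin r → ℕ × ℕ) :
    ∃ P : Polynomial ℚ,
      ∀ (F : Type) (_ : Field F) (_ : Fintype F)
        (V : Type) (_ : AddCommGroup V) (_ : Module F V) (_ : FiniteDimensional F V)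
        (T : V →ₗ[F] V), HasType τ T →
          (Set.ncard (tupleSet T r a) : ℚ) = P.eval (Fintype.card F : ℚ) := by
  obtain ⟨n, hn⟩ := type_dim τ
  obtain ⟨P, hP⟩ := profile (fun ω : Ty τ => ω.1) n hn (base_flags τ) r a
  refine ⟨P, ?_⟩
  intro F _ _ V _ _ _ T hT
  exact hP ⟨Op.mk (FF.mk F) V T, hT⟩
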